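/- Every finite-volume non-compact right-angled convex hyperbolic 5-polyhedron P has at least two ideal vertices: v_∞(P) ≥ 2. -/

import Mathlib

open scoped BigOperators

noncomputable section

/-- The Minkowski bilinear form `⟨x,y⟩ = -x₀y₀ + x₁y₁ + ⋯ + xₙyₙ` on `ℝ^{n+1}`. -/
def mink {n : ℕ} (x y : Fin (n + 1) → ℝ) : ℝ :=
  -(x 0 * y 0) + ∑ i : Fin n, x i.succ * y i.succ

/-- The hyperboloid model of the hyperbolic space `ℍⁿ`. -/
def Hyperboloid (n : ℕ) : Set (Fin (n + 1) → ℝ) :=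
  {x | mink x x = -1 ∧ 0 < x 0}

/-- The Klein projection `x ↦ (x₁/x₀, …, xₙ/x₀)` of the hyperboloid onto the unit ball. -/
def kleinMap {n : ℕ} (x : Fin (n + 1) → ℝ) : EuclideanSpace ℝ (Fin n) :=
  WithLp.toLp 2 fun i => x i.succ / x 0

/-- Dimension of a subset of a real vector space: the rank of its vector span. -/
def sdim {n : ℕ} (s : Set (EuclideanSpace ℝ (Fin n))) : ℕ :=
  Module.finrank ℝ (vectorSpan ℝ s)

/-- A convex hyperbolic `n`-polyhedron: a finite intersection of hyperbolic half-spaces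
`H_{eᵢ}⁻ = {x : ⟨eᵢ,x⟩ ≤ 0}` (with `⟨eᵢ,eᵢ⟩ = 1`) having nonempty interior
(equivalently, its Klein-model image has nonempty interior in `ℝⁿ`). -/
structure HypPolyhedron (n : ℕ) where
  m : ℕ
  e : Fin m → (Fin (n + 1) → ℝ)
  unit : ∀ i, mink (e i) (e i) = 1
  nonempty_int :
    (interior (kleinMap '' {x ∈ Hyperboloid n | ∀ i, mink (e i) x ≤ 0})).Nonempty

namespace HypPolyhedron

variable {n : ℕ} (P : HypPolyhedron n)

/-- The set of points of the polyhedron in the hyperboloid model. -/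
def carrier : Set (Fin (n + 1) → ℝ) :=
  {x ∈ Hyperboloid n | ∀ i, mink (P.e i) x ≤ 0}

/-- `P̄`: the closure of the Klein-model image of the polyhedron in the closed unit ball. -/
def cl : Set (EuclideanSpace ℝ (Fin n)) :=
  closure (kleinMap '' P.carrier)

/-- The `k`-faces of `P`: the `k`-dimensional (nonempty) exposed faces of `P̄`. -/
def faces (k : ℕ) : Set (Set (EuclideanSpace ℝ (Fin n))) :=
  {F | IsExposed ℝ P.cl F ∧ F.Nonempty ∧ sdim F = k}

/-- `a_k(P)`: the number of `k`-faces of `P`. -/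
def a (k : ℕ) : ℕ := (P.faces k).ncard

/-- Vertices of `P`: the points of `0`-dimensional exposed faces of `P̄`. -/
def verts : Set (EuclideanSpace ℝ (Fin n)) :=
  {v | IsExposed ℝ P.cl {v}}

/-- Ideal vertices: vertices lying on the unit sphere. -/
def idealVerts : Set (EuclideanSpace ℝ (Fin n)) :=
  {v ∈ P.verts | ‖v‖ = 1}

/-- Finite vertices: vertices lying in the open unit ball. -/
def finiteVerts : Set (EuclideanSpace ℝ (Fin n)) :=
  {v ∈ P.verts | ‖v‖ < 1}

/-- `v_∞(P)`: the number of ideal vertices of `P`. -/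
def vInf : ℕ := P.idealVerts.ncard

/-- The bounding hyperplane `H_e` contains the face `F`. -/
def faceInHyperplane (e : Fin (n + 1) → ℝ) (F : Set (EuclideanSpace ℝ (Fin n))) : Prop :=
  ∀ x ∈ P.carrier, kleinMap x ∈ F → mink e x = 0

/-- `P` is right-angled: whenever two distinct bounding hyperplanes both contain an
`(n-2)`-dimensional face of `P`, the corresponding unit normals are orthogonal,
i.e. the dihedral angle is `π/2`. -/
def IsRightAngled : Prop :=
  ∀ i j : Fin P.m, i ≠ j →
    (∃ F ∈ P.faces (n - 2), P.faceInHyperplane (P.e i) F ∧ P.faceInHyperplane (P.e j) F) →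
    mink (P.e i) (P.e j) = 0

/-- `P` has finite volume: `P̄` is the convex hull of its (finitely many) vertices. -/
def FiniteVolume : Prop :=
  P.verts.Finite ∧ P.cl = convexHull ℝ P.verts

/-- `P` is compact: finite volume and all vertices are finite. -/
def IsCompactPoly : Prop :=
  P.FiniteVolume ∧ ∀ v ∈ P.verts, ‖v‖ < 1

/-- `P` is ideal: finite volume and all vertices are ideal. -/
def IsIdeal : Prop :=
  P.FiniteVolume ∧ ∀ v ∈ P.verts, ‖v‖ = 1

end HypPolyhedron

/-- `ν(P) = a_{n-1}(P) + v_∞(P)` ranging over the family `𝒫ⁿ` of finite-volume non-compact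
right-angled convex hyperbolic `n`-polyhedra. -/
def nuSet (n : ℕ) : Set ℕ :=
  {m | ∃ P : HypPolyhedron n,
        P.FiniteVolume ∧ P.IsRightAngled ∧ ¬ P.IsCompactPoly ∧ P.a (n - 1) + P.vInf = m}

/-- `νₙ = sInf {ν(P) : P ∈ 𝒫ⁿ}` (with `sInf ∅ = 0`). -/
def nu (n : ℕ) : ℕ := sInf (nuSet n)

open Topology

/-!
Suppose that `P`, of dimension `n ≥ 5`, has at most one ideal vertex. At a finite vertex exactly `n`
facets meet, pairwise orthogonally, so the edges at it correspond to these facets and the polygonal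
faces through it to the `(n - 2)`-subsets of them. Order the finite vertices by a generic
linear-fractional function which tends to `+∞` exactly at the ideal vertex, if there is one. By
convexity a polygonal face has at most one local minimum and one local maximum among its finite
vertices, and no local maximum if it contains the ideal vertex. A vertex with `u` ascending edges is
a local minimum of `u.choose 2` polygons and a local maximum of `(n - u).choose 2` of them, and

  `u.choose 2 + (n - u).choose 2 ≥ (2 / 5) * n.choose 2`,

strictly if `u = n`, as at the lowest vertex. So some polygon has fewer than `5 / 2` finite vertices
per local extremum. But a compact right-angled hyperbolic polygon has at least five vertices for its
two extrema, and one with a single ideal vertex has at least three finite ones for its minimum.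
-/

/-! ### Minkowski space -/

section Minkowski

variable {n : ℕ} {x y z : Fin (n + 1) → ℝ}

lemma mink_comm (x y : Fin (n + 1) → ℝ) : mink x y = mink y x := by
  simp only [mink, mul_comm]

lemma mink_add_left (x y z : Fin (n + 1) → ℝ) : mink (x + y) z = mink x z + mink y z := by
  simp only [mink, Pi.add_apply, add_mul, Finset.sum_add_distrib]
  ring

lemma mink_smul_left (c : ℝ) (x z : Fin (n + 1) → ℝ) : mink (c • x) z = c * mink x z := by
  simp only [mink, Pi.smul_apply, smul_eq_mul, mul_add, Finset.mul_sum, mul_assoc, mul_neg]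

lemma mink_add_right (x y z : Fin (n + 1) → ℝ) : mink x (y + z) = mink x y + mink x z := by
  rw [mink_comm, mink_add_left, mink_comm y, mink_comm z]

lemma mink_smul_right (c : ℝ) (x z : Fin (n + 1) → ℝ) : mink x (c • z) = c * mink x z := by
  rw [mink_comm, mink_smul_left, mink_comm]

variable (n) in
/-- The Minkowski form `mink` as a bundled bilinear form, giving access to the linear algebra
library. -/
def minkForm : LinearMap.BilinForm ℝ (Fin (n + 1) → ℝ) :=
  LinearMap.mk₂ ℝ mink mink_add_left mink_smul_left mink_add_right mink_smul_right

lemma minkForm_apply (x y : Fin (n + 1) → ℝ) : minkForm n x y = mink x y := rfl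

lemma mink_neg_left (x y : Fin (n + 1) → ℝ) : mink (-x) y = -mink x y := by
  simp only [← minkForm_apply, map_neg, LinearMap.neg_apply]

lemma mink_neg_right (x y : Fin (n + 1) → ℝ) : mink x (-y) = -mink x y := by
  simp only [← minkForm_apply, map_neg]

lemma mink_sub_left (x y z : Fin (n + 1) → ℝ) : mink (x - y) z = mink x z - mink y z := by
  simp only [← minkForm_apply, map_sub, LinearMap.sub_apply]

lemma mink_sub_right (x y z : Fin (n + 1) → ℝ) : mink x (y - z) = mink x y - mink x z := by
  simp only [← minkForm_apply, map_sub]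

lemma mink_zero_left (x : Fin (n + 1) → ℝ) : mink 0 x = 0 := by
  simp only [← minkForm_apply, map_zero, LinearMap.zero_apply]

lemma mink_sum_right {ι : Type*} (s : Finset ι) (f : ι → Fin (n + 1) → ℝ)
    (y : Fin (n + 1) → ℝ) : mink y (∑ i ∈ s, f i) = ∑ i ∈ s, mink y (f i) := by
  simp only [← minkForm_apply, map_sum]

lemma continuous_mink {X : Type*} [TopologicalSpace X] {f g : X → Fin (n + 1) → ℝ}
    (hf : Continuous f) (hg : Continuous g) : Continuous fun x => mink (f x) (g x) := by
  unfold mink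
  fun_prop

variable (n) in
/-- The spatial coordinates `(x₁, …, xₙ)` of a vector of Minkowski space, as a vector of Euclidean
space. -/
def spatialPart : (Fin (n + 1) → ℝ) →ₗ[ℝ] EuclideanSpace ℝ (Fin n) :=
  (WithLp.linearEquiv 2 ℝ (Fin n → ℝ)).symm ∘ₗ LinearMap.funLeft ℝ ℝ Fin.succ

lemma spatialPart_apply (x : Fin (n + 1) → ℝ) (i : Fin n) : spatialPart n x i = x i.succ := rfl

lemma eq_zero_of_spatialPart_eq_zero (hx0 : x 0 = 0) (hx : spatialPart n x = 0) : x = 0 := by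
  funext i
  cases i using Fin.cases with
  | zero => exact hx0
  | succ i => exact congrArg (fun v : EuclideanSpace ℝ (Fin n) => v i) hx

lemma mink_eq_inner (x y : Fin (n + 1) → ℝ) :
    mink x y = -(x 0 * y 0) + inner ℝ (spatialPart n x) (spatialPart n y) := by
  simp [mink, spatialPart_apply, PiLp.inner_apply, mul_comm]

lemma mink_self (x : Fin (n + 1) → ℝ) : mink x x = ‖spatialPart n x‖ ^ 2 - x 0 ^ 2 := by
  rw [mink_eq_inner, real_inner_self_eq_norm_sq]
  ring

variable (n) in
/-- The open cone of future-directed timelike vectors: the cone over the hyperboloid. -/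
def futureCone : Set (Fin (n + 1) → ℝ) := {x | mink x x < 0 ∧ 0 < x 0}

lemma mem_futureCone_iff_norm_lt : x ∈ futureCone n ↔ ‖spatialPart n x‖ < x 0 := by
  simp only [futureCone, Set.mem_ofPred_eq, mink_self, sub_neg]
  constructor
  · rintro ⟨hx, hx0⟩
    exact lt_of_pow_lt_pow_left₀ 2 hx0.le hx
  · intro hx
    exact ⟨by gcongr, (norm_nonneg _).trans_lt hx⟩

lemma isOpen_futureCone : IsOpen (futureCone n) :=
  (isOpen_lt (continuous_mink continuous_id continuous_id) continuous_const).inter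
    (isOpen_lt continuous_const (continuous_apply 0))

lemma mink_neg_of_mem_futureCone (hx : x ∈ futureCone n) (hy : mink y y ≤ 0) (hy0 : 0 < y 0) :
    mink x y < 0 := by
  rw [mem_futureCone_iff_norm_lt] at hx
  rw [mink_self, sub_nonpos] at hy
  have hle : ‖spatialPart n y‖ ≤ y 0 := le_of_sq_le_sq hy hy0.le
  have hcs := real_inner_le_norm (spatialPart n x) (spatialPart n y)
  have hlt : ‖spatialPart n x‖ * ‖spatialPart n y‖ < x 0 * y 0 :=
    (mul_le_mul_of_nonneg_left hle (norm_nonneg _)).trans_lt (mul_lt_mul_of_pos_right hx hy0)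
  rw [mink_eq_inner]
  linarith

lemma mem_futureCone_of_mink_neg (hx : x ∈ futureCone n) (hy : mink y y < 0)
    (hxy : mink x y < 0) : y ∈ futureCone n := by
  refine ⟨hy, ?_⟩
  by_contra! hy0
  have hy0' : y 0 ≠ 0 := fun h => by
    rw [mink_self, h] at hy
    nlinarith [norm_nonneg (spatialPart n y)]
  have hneg := mink_neg_of_mem_futureCone (y := -y) hx
    (by rw [mink_neg_left, mink_neg_right, neg_neg]; exact hy.le)
    (neg_pos.2 (lt_of_le_of_ne hy0 hy0'))
  rw [mink_neg_right] at hneg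
  linarith

lemma mink_self_pos_of_orthogonal (hx : x ∈ futureCone n) (hxy : mink x y = 0) (hy : y ≠ 0) :
    0 < mink y y := by
  rw [mem_futureCone_iff_norm_lt] at hx
  have hcs := abs_real_inner_le_norm (spatialPart n x) (spatialPart n y)
  rw [show inner ℝ (spatialPart n x) (spatialPart n y) = x 0 * y 0 by
    rw [mink_eq_inner] at hxy; linarith, abs_mul, abs_of_pos ((norm_nonneg _).trans_lt hx)] at hcs
  have hx0 : 0 < x 0 := (norm_nonneg _).trans_lt hx
  have hspos : 0 < ‖spatialPart n y‖ := by
    refine norm_pos_iff.2 fun h => hy (eq_zero_of_spatialPart_eq_zero ?_ h)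
    rw [h, norm_zero, mul_zero] at hcs
    exact abs_eq_zero.1 (le_antisymm (nonpos_of_mul_nonpos_right hcs hx0) (abs_nonneg _))
  have hlt : |y 0| < ‖spatialPart n y‖ :=
    lt_of_mul_lt_mul_left (hcs.trans_lt (mul_lt_mul_of_pos_right hx hspos)) hx0.le
  rw [mink_self, sub_pos]
  exact sq_lt_sq' (abs_lt.1 hlt).1 (abs_lt.1 hlt).2

lemma add_mem_futureCone (hx : x ∈ futureCone n) (hy : y ∈ futureCone n) :
    x + y ∈ futureCone n := by
  rw [mem_futureCone_iff_norm_lt] at *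
  rw [map_add]
  exact (norm_add_le _ _).trans_lt (add_lt_add hx hy)

lemma smul_mem_futureCone {c : ℝ} (hc : 0 < c) (hx : x ∈ futureCone n) :
    c • x ∈ futureCone n := by
  rw [mem_futureCone_iff_norm_lt] at *
  rw [map_smul, norm_smul, Real.norm_of_nonneg hc.le]
  exact mul_lt_mul_of_pos_left hx hc

lemma exists_pos_add_smul_mem_futureCone {ι : Type*} {e : ι → Fin (n + 1) → ℝ} {J : Finset ι}
    (hz : z ∈ futureCone n) (hJ : ∀ k ∈ J, mink (e k) z < 0) (u : Fin (n + 1) → ℝ) :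
    ∃ ε : ℝ, 0 < ε ∧ z + ε • u ∈ futureCone n ∧ ∀ k ∈ J, mink (e k) (z + ε • u) < 0 := by
  have hcont : Continuous fun ε : ℝ => z + ε • u := by fun_prop
  have hfuture : ∀ᶠ ε in 𝓝 (0 : ℝ), z + ε • u ∈ futureCone n :=
    hcont.continuousAt.eventually_mem (isOpen_futureCone.mem_nhds (by simpa using hz))
  have hneg : ∀ᶠ ε in 𝓝 (0 : ℝ), ∀ k ∈ J, mink (e k) (z + ε • u) < 0 :=
    (Filter.eventually_all_finset J).2 fun k hk =>
      (continuous_mink continuous_const hcont).continuousAt.eventually_lt continuousAt_const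
        (by simpa using hJ k hk)
  obtain ⟨ε, h, hε⟩ := (((hfuture.and hneg).filter_mono
    (nhdsWithin_le_nhds (s := Set.Ioi 0))).and self_mem_nhdsWithin).exists
  exact ⟨ε, hε, h⟩

/-- The Minkowski-orthogonal projection of `x` along the non-null vector `f`. -/
def minkProj (f x : Fin (n + 1) → ℝ) : Fin (n + 1) → ℝ := x - (mink f x / mink f f) • f

lemma mink_minkProj (g f x : Fin (n + 1) → ℝ) :
    mink g (minkProj f x) = mink g x - mink f x / mink f f * mink g f := by
  rw [minkProj, mink_sub_right, mink_smul_right]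

lemma mink_self_minkProj {f : Fin (n + 1) → ℝ} (hf : mink f f ≠ 0) (x : Fin (n + 1) → ℝ) :
    mink f (minkProj f x) = 0 := by
  rw [mink_minkProj, div_mul_cancel₀ _ hf, sub_self]

lemma minkProj_mem_futureCone {f : Fin (n + 1) → ℝ} (hf : 0 < mink f f) (hx : x ∈ futureCone n) :
    minkProj f x ∈ futureCone n := by
  have hneg : mink x (minkProj f x) < 0 := by
    rw [mink_minkProj, mink_comm x f, div_mul_eq_mul_div]
    have : 0 ≤ mink f x * mink f x / mink f f := div_nonneg (mul_self_nonneg _) hf.le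
    linarith [hx.1]
  refine mem_futureCone_of_mink_neg hx ?_ hneg
  conv_lhs => arg 1; rw [minkProj]
  rwa [mink_sub_left, mink_smul_left, mink_self_minkProj hf.ne', mul_zero, sub_zero]

lemma card_le_of_orthogonal_of_mem_futureCone {κ : Type*} [Fintype κ] {b : κ → Fin (n + 1) → ℝ}
    (hx : x ∈ futureCone n) (hb : Pairwise fun i j => mink (b i) (b j) = 0)
    (hb0 : ∀ i, b i ≠ 0) (hbx : ∀ i, mink x (b i) = 0) : Fintype.card κ ≤ n := by
  have hli : LinearIndependent ℝ fun o : Option κ => o.elim x b := by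
    refine LinearMap.linearIndependent_of_isOrthoᵢ (B := minkForm n)
      (LinearMap.isOrthoᵢ_def.2 ?_) ?_
    · rintro (_ | i) (_ | j) hij
      · exact absurd rfl hij
      · exact hbx j
      · exact (mink_comm _ _).trans (hbx i)
      · exact hb fun h => hij (congrArg some h)
    · rintro (_ | i)
      · exact hx.1.ne
      · exact (mink_self_pos_of_orthogonal hx (hbx i) (hb0 i)).ne'
  simpa using hli.fintype_card_le_finrank

lemma exists_eq_sum_add_smul {κ : Type*} [Fintype κ] {b : κ → Fin (n + 1) → ℝ} {w : Fin (n + 1) → ℝ}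
    (hw : w ∈ futureCone n) (hunit : ∀ i, mink (b i) (b i) = 1)
    (hb : Pairwise fun i j => mink (b i) (b j) = 0) (hbw : ∀ i, mink w (b i) = 0)
    (hcard : Fintype.card κ = n) (x : Fin (n + 1) → ℝ) :
    ∃ c : ℝ, x = ∑ k, mink x (b k) • b k + c • w := by
  classical
  set y := x - (∑ k, mink x (b k) • b k + (mink x w / mink w w) • w) with hy
  suffices h : y = 0 from ⟨_, sub_eq_zero.1 h⟩
  have hyw : mink w y = 0 := by
    simp only [hy, mink_sub_right, mink_add_right, mink_sum_right, mink_smul_right, hbw, mul_zero,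
      Finset.sum_const_zero, zero_add, div_mul_cancel₀ _ hw.1.ne, mink_comm w x, sub_self]
  have hyb (i : κ) : mink (b i) y = 0 := by
    have hsum : ∑ k, mink x (b k) * mink (b i) (b k) = mink x (b i) := by
      rw [Finset.sum_eq_single i (fun j _ hj => by rw [hb hj.symm, mul_zero]) (by simp), hunit,
        mul_one]
    simp only [hy, mink_sub_right, mink_add_right, mink_sum_right, mink_smul_right, hsum,
      mink_comm _ w, hbw, mink_comm (b i) x, mul_zero, add_zero, sub_self]
  by_contra hy0
  have := card_le_of_orthogonal_of_mem_futureCone (b := fun o : Option κ => o.elim y b) hw ?_ ?_ ?_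
  · rw [Fintype.card_option] at this
    lia
  · rintro (_ | i) (_ | j) hij
    · exact absurd rfl hij
    · exact (mink_comm _ _).trans (hyb j)
    · exact hyb i
    · exact hb fun h => hij (congrArg some h)
  · rintro (_ | i)
    · exact hy0
    · change b i ≠ 0
      intro h
      simpa [h, mink_zero_left] using hunit i
  · rintro (_ | i)
    · exact hyw
    · exact hbw i

end Minkowski

/-! ### The Klein model -/

section Klein

variable {n : ℕ} {x : Fin (n + 1) → ℝ} {p : EuclideanSpace ℝ (Fin n)}

/-- The representative in Minkowski space, normalised to time coordinate `1`, of a point of the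
Klein model. -/
def kleinLift (p : EuclideanSpace ℝ (Fin n)) : Fin (n + 1) → ℝ := Fin.cons 1 p.ofLp

/-- The inclusion of Euclidean space in Minkowski space as the vectors of time coordinate `0`: the
directions in which `kleinLift` moves. -/
def spatial (u : EuclideanSpace ℝ (Fin n)) : Fin (n + 1) → ℝ := Fin.cons 0 u.ofLp

lemma kleinLift_zero (p : EuclideanSpace ℝ (Fin n)) : kleinLift p 0 = 1 := rfl

lemma spatialPart_kleinLift (p : EuclideanSpace ℝ (Fin n)) : spatialPart n (kleinLift p) = p := rfl

lemma kleinLift_add_smul (p : EuclideanSpace ℝ (Fin n)) (c : ℝ) (u : EuclideanSpace ℝ (Fin n)) :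
    kleinLift (p + c • u) = kleinLift p + c • spatial u := by
  funext i
  cases i using Fin.cases <;> simp [kleinLift, spatial]

lemma kleinLift_sum {s : Finset (EuclideanSpace ℝ (Fin n))} {c : EuclideanSpace ℝ (Fin n) → ℝ}
    (hc : ∑ p ∈ s, c p = 1) : kleinLift (∑ p ∈ s, c p • p) = ∑ p ∈ s, c p • kleinLift p := by
  funext i
  cases i using Fin.cases <;> simp [kleinLift, Finset.sum_apply, hc]

lemma mink_spatial (x : Fin (n + 1) → ℝ) (u : EuclideanSpace ℝ (Fin n)) :
    mink x (spatial u) = inner ℝ (spatialPart n x) u := by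
  rw [mink_eq_inner, show spatial u 0 = 0 from rfl, mul_zero, neg_zero, zero_add]
  rfl

lemma mink_kleinLift (x : Fin (n + 1) → ℝ) (p : EuclideanSpace ℝ (Fin n)) :
    mink x (kleinLift p) = -x 0 + inner ℝ (spatialPart n x) p := by
  rw [mink_eq_inner, kleinLift_zero, mul_one, spatialPart_kleinLift]

lemma mink_kleinLift_self (p : EuclideanSpace ℝ (Fin n)) :
    mink (kleinLift p) (kleinLift p) = ‖p‖ ^ 2 - 1 := by
  rw [mink_self, spatialPart_kleinLift, kleinLift_zero, one_pow]

lemma kleinLift_mem_futureCone_iff : kleinLift p ∈ futureCone n ↔ ‖p‖ < 1 :=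
  mem_futureCone_iff_norm_lt

lemma kleinMap_kleinLift (p : EuclideanSpace ℝ (Fin n)) : kleinMap (kleinLift p) = p := by
  ext i
  simp [kleinMap, kleinLift]

lemma kleinMap_smul {c : ℝ} (hc : c ≠ 0) (x : Fin (n + 1) → ℝ) :
    kleinMap (c • x) = kleinMap x := by
  ext i
  simp [kleinMap, mul_div_mul_left _ _ hc]

lemma kleinLift_injective : Function.Injective (kleinLift (n := n)) :=
  Function.LeftInverse.injective kleinMap_kleinLift

lemma smul_kleinLift_kleinMap (hx : x 0 ≠ 0) : x 0 • kleinLift (kleinMap x) = x := by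
  funext i
  cases i using Fin.cases
  · simp [kleinLift]
  · simp [kleinLift, kleinMap, mul_div_cancel₀ _ hx]

lemma kleinLift_kleinMap (hx : x 0 ≠ 0) : kleinLift (kleinMap x) = (x 0)⁻¹ • x := by
  rw [eq_inv_smul_iff₀ hx, smul_kleinLift_kleinMap hx]

lemma kleinLift_kleinMap_mem_futureCone (hx : x ∈ futureCone n) :
    kleinLift (kleinMap x) ∈ futureCone n := by
  rw [kleinLift_kleinMap hx.2.ne']
  exact smul_mem_futureCone (inv_pos.2 hx.2) hx

lemma mink_kleinLift_kleinMap_nonpos_iff (hx : 0 < x 0) (e : Fin (n + 1) → ℝ) :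
    mink e (kleinLift (kleinMap x)) ≤ 0 ↔ mink e x ≤ 0 := by
  rw [kleinLift_kleinMap hx.ne', mink_smul_right, inv_mul_le_iff₀ hx, mul_zero]

lemma mink_kleinLift_kleinMap_eq_zero_iff (hx : 0 < x 0) (e : Fin (n + 1) → ℝ) :
    mink e (kleinLift (kleinMap x)) = 0 ↔ mink e x = 0 := by
  rw [kleinLift_kleinMap hx.ne', mink_smul_right, mul_eq_zero, or_iff_right (inv_pos.2 hx).ne']

lemma exists_pos_smul_mem_hyperboloid (hx : x ∈ futureCone n) :
    ∃ c : ℝ, 0 < c ∧ c • x ∈ Hyperboloid n := by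
  have hq : 0 < √(-mink x x) := Real.sqrt_pos.2 (neg_pos.2 hx.1)
  refine ⟨(√(-mink x x))⁻¹, inv_pos.2 hq, ?_, mul_pos (inv_pos.2 hq) hx.2⟩
  have hsq := Real.mul_self_sqrt (neg_pos.2 hx.1).le
  rw [mink_smul_left, mink_smul_right, ← neg_neg (mink x x)]
  nth_rewrite 3 [← hsq]
  field_simp

end Klein

namespace HypPolyhedron

variable {n : ℕ} (P : HypPolyhedron n) {p : EuclideanSpace ℝ (Fin n)}

lemma mem_image_carrier : p ∈ kleinMap '' P.carrier ↔
    kleinLift p ∈ futureCone n ∧ ∀ i, mink (P.e i) (kleinLift p) ≤ 0 := by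
  constructor
  · rintro ⟨x, ⟨⟨hx, hx0⟩, hxe⟩, rfl⟩
    exact ⟨kleinLift_kleinMap_mem_futureCone ⟨by linarith, hx0⟩,
      fun i => (mink_kleinLift_kleinMap_nonpos_iff hx0 _).2 (hxe i)⟩
  · rintro ⟨hp, hpe⟩
    obtain ⟨c, hc, hmem⟩ := exists_pos_smul_mem_hyperboloid hp
    refine ⟨c • kleinLift p, ⟨hmem, fun i => ?_⟩, ?_⟩
    · rw [mink_smul_right]
      exact mul_nonpos_of_nonneg_of_nonpos hc.le (hpe i)
    · rw [kleinMap_smul hc.ne', kleinMap_kleinLift]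

lemma mem_cl_of_mem_futureCone (hp : kleinLift p ∈ futureCone n)
    (hpe : ∀ i, mink (P.e i) (kleinLift p) ≤ 0) : p ∈ P.cl :=
  subset_closure (P.mem_image_carrier.2 ⟨hp, hpe⟩)

lemma norm_le_and_mink_nonpos_of_mem_cl (hp : p ∈ P.cl) :
    ‖p‖ ≤ 1 ∧ ∀ i, mink (P.e i) (kleinLift p) ≤ 0 := by
  have hcl : IsClosed {p : EuclideanSpace ℝ (Fin n) |
      ‖p‖ ≤ 1 ∧ ∀ i, mink (P.e i) (kleinLift p) ≤ 0} := by
    simp only [mink_kleinLift, Set.ofPred_and, Set.ofPred_forall]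
    exact (isClosed_le continuous_norm continuous_const).inter
      (isClosed_iInter fun i => isClosed_le (by fun_prop) continuous_const)
  refine closure_minimal (fun q hq => ?_) hcl hp
  obtain ⟨hq, hqe⟩ := P.mem_image_carrier.1 hq
  exact ⟨(kleinLift_mem_futureCone_iff.1 hq).le, hqe⟩

lemma spatialPart_e_ne_zero (i : Fin P.m) : spatialPart n (P.e i) ≠ 0 := by
  intro h
  have := P.unit i
  rw [mink_self, h, norm_zero] at this
  nlinarith [sq_nonneg (P.e i 0)]

lemma exists_forall_mink_neg : ∃ p ∈ futureCone n, ∀ i, mink (P.e i) p < 0 := by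
  obtain ⟨p, hp⟩ := P.nonempty_int
  refine ⟨kleinLift p, (P.mem_image_carrier.1 (interior_subset hp)).1, fun i => ?_⟩
  have hcont : ContinuousAt (fun ε : ℝ => p + ε • spatialPart n (P.e i)) 0 := by fun_prop
  have hnear := (hcont.eventually_mem (isOpen_interior.mem_nhds (by simpa using hp))).filter_mono
    (nhdsWithin_le_nhds (s := Set.Ioi 0))
  obtain ⟨ε, hε, hε0⟩ := (hnear.and self_mem_nhdsWithin).exists
  have hle := (P.mem_image_carrier.1 (interior_subset hε)).2 i
  rw [kleinLift_add_smul, mink_add_right, mink_smul_right, mink_spatial,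
    real_inner_self_eq_norm_sq] at hle
  have hpos : 0 < ε * ‖spatialPart n (P.e i)‖ ^ 2 :=
    mul_pos hε0 (pow_pos (norm_pos_iff.2 (P.spatialPart_e_ne_zero i)) 2)
  linarith

end HypPolyhedron

/-! ### Facets and their angles -/

lemma exists_irredundant_subsystem {X ι : Type*} (S : Set X) (f : ι → X → ℝ) (I : Finset ι) :
    ∃ J ⊆ I, (∀ x ∈ S, (∀ j ∈ J, f j x ≤ 0) → ∀ i ∈ I, f i x ≤ 0) ∧
      ∀ j ∈ J, ∃ x ∈ S, (∀ k ∈ J, k ≠ j → f k x ≤ 0) ∧ 0 < f j x := by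
  classical
  obtain ⟨J, hJI, hJ⟩ := exists_minimal_le_of_wellFoundedLT
    (fun J : Finset ι => ∀ x ∈ S, (∀ j ∈ J, f j x ≤ 0) → ∀ i ∈ I, f i x ≤ 0) I fun _ _ h => h
  refine ⟨J, hJI, hJ.prop, fun j hj => ?_⟩
  by_contra! hred
  refine hJ.not_prop_of_lt (Finset.erase_ssubset hj) fun x hx hxJ => ?_
  have hne : ∀ k ∈ J, k ≠ j → f k x ≤ 0 := fun k hk hkj => hxJ k (Finset.mem_erase.2 ⟨hkj, hk⟩)
  refine hJ.prop x hx fun k hk => ?_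
  rcases eq_or_ne k j with rfl | hkj
  · exact hred x hx hne
  · exact hne k hk hkj

lemma exists_facet_point {n : ℕ} {ι : Type*} {e : ι → Fin (n + 1) → ℝ} {J : Finset ι}
    {p x : Fin (n + 1) → ℝ} {j : ι} (hp : p ∈ futureCone n) (hx : x ∈ futureCone n)
    (hpJ : ∀ k ∈ J, mink (e k) p < 0) (hj : j ∈ J)
    (hxJ : ∀ k ∈ J, k ≠ j → mink (e k) x ≤ 0) (hxj : 0 < mink (e j) x) :
    ∃ z ∈ futureCone n, mink (e j) z = 0 ∧ (∀ k ∈ J, k ≠ j → mink (e k) z < 0) ∧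
      ∀ y, mink y p = 0 → mink y x = 0 → mink y z = 0 := by
  have hpj : 0 < -mink (e j) p := neg_pos.2 (hpJ j hj)
  have hmink (y : Fin (n + 1) → ℝ) : mink y (mink (e j) x • p + (-mink (e j) p) • x) =
      mink (e j) x * mink y p + -mink (e j) p * mink y x := by
    rw [mink_add_right, mink_smul_right, mink_smul_right]
  refine ⟨mink (e j) x • p + (-mink (e j) p) • x,
    add_mem_futureCone (smul_mem_futureCone hxj hp) (smul_mem_futureCone hpj hx), ?_, ?_, ?_⟩
  · rw [hmink]
    ring
  · intro k hk hkj
    rw [hmink]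
    exact add_neg_of_neg_of_nonpos (mul_neg_of_pos_of_neg hxj (hpJ k hk))
      (mul_nonpos_of_nonneg_of_nonpos hpj.le (hxJ k hk hkj))
  · intro y hyp hyx
    rw [hmink, hyp, hyx, mul_zero, mul_zero, add_zero]

namespace HypPolyhedron

variable {n : ℕ} {P : HypPolyhedron n} {i j : Fin P.m}

lemma exists_pos_add_smul_mem_cl {A J : Finset (Fin P.m)} {q u : EuclideanSpace ℝ (Fin n)}
    (hdef : ∀ x ∈ futureCone n, (∀ k ∈ A, mink (P.e k) x = 0) → (∀ k ∈ J, mink (P.e k) x < 0) →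
      ∀ k, mink (P.e k) x ≤ 0)
    (hq : kleinLift q ∈ futureCone n) (hqA : ∀ k ∈ A, mink (P.e k) (kleinLift q) = 0)
    (hqJ : ∀ k ∈ J, mink (P.e k) (kleinLift q) < 0)
    (hu : ∀ k ∈ A, inner ℝ (spatialPart n (P.e k)) u = 0) :
    ∃ ε : ℝ, 0 < ε ∧ q + ε • u ∈ P.cl ∧ ∀ k ∈ A, mink (P.e k) (kleinLift (q + ε • u)) = 0 := by
  obtain ⟨ε, hε, hmem, hneg⟩ := exists_pos_add_smul_mem_futureCone hq hqJ (spatial u)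
  rw [← kleinLift_add_smul] at hmem hneg
  have hzero : ∀ k ∈ A, mink (P.e k) (kleinLift (q + ε • u)) = 0 := fun k hk => by
    rw [kleinLift_add_smul, mink_add_right, hqA k hk, mink_smul_right, mink_spatial, hu k hk,
      mul_zero, add_zero]
  exact ⟨ε, hε, P.mem_cl_of_mem_futureCone hmem (hdef _ hmem hzero hneg), hzero⟩

variable (P) in
/-- The part of `P̄` in the hyperplanes `H_{eᵢ}` and `H_{eⱼ}`: a face of codimension two if the
corresponding facets are adjacent. -/
def ridge (i j : Fin P.m) : Set (EuclideanSpace ℝ (Fin n)) :=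
  {p ∈ P.cl | mink (P.e i) (kleinLift p) = 0 ∧ mink (P.e j) (kleinLift p) = 0}

lemma isExposed_ridge (i j : Fin P.m) : IsExposed ℝ P.cl (P.ridge i j) := by
  rintro ⟨q, hq, hqi, hqj⟩
  refine ⟨innerSL ℝ (spatialPart n (P.e i + P.e j)), ?_⟩
  have hval (p : EuclideanSpace ℝ (Fin n)) : inner ℝ (spatialPart n (P.e i + P.e j)) p =
      mink (P.e i) (kleinLift p) + mink (P.e j) (kleinLift p) + (P.e i 0 + P.e j 0) := by
    rw [map_add, inner_add_left, mink_kleinLift, mink_kleinLift]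
    ring
  ext p
  simp only [ridge, Set.mem_ofPred_eq, innerSL_apply_apply, hval]
  refine and_congr_right fun hp => ⟨fun h y hy => ?_, fun h => ?_⟩
  · have hle := (P.norm_le_and_mink_nonpos_of_mem_cl hy).2
    linarith [hle i, hle j, h.1, h.2]
  · have hle := (P.norm_le_and_mink_nonpos_of_mem_cl hp).2
    have hmax := h q hq
    constructor <;> linarith [hle i, hle j]

lemma vectorSpan_ridge {q : EuclideanSpace ℝ (Fin n)} (hq : q ∈ P.ridge i j)
    (hopen : ∀ u, inner ℝ (spatialPart n (P.e i)) u = 0 → inner ℝ (spatialPart n (P.e j)) u = 0 →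
      ∃ ε : ℝ, 0 < ε ∧ q + ε • u ∈ P.ridge i j) :
    vectorSpan ℝ (P.ridge i j) =
      (Submodule.span ℝ {spatialPart n (P.e i), spatialPart n (P.e j)})ᗮ := by
  apply le_antisymm
  · rw [vectorSpan, Submodule.span_le]
    rintro _ ⟨a, ⟨-, hai, haj⟩, b, ⟨-, hbi, hbj⟩, rfl⟩
    rw [mink_kleinLift] at hai haj hbi hbj
    rw [SetLike.mem_coe, Submodule.mem_orthogonal]
    intro x hx
    obtain ⟨c, d, rfl⟩ := Submodule.mem_span_pair.1 hx
    simp only [vsub_eq_sub, inner_add_left, inner_sub_right, real_inner_smul_left]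
    linear_combination c * hai - c * hbi + d * haj - d * hbj
  · intro u hu
    rw [Submodule.mem_orthogonal] at hu
    obtain ⟨ε, hε, hmem⟩ := hopen u (hu _ (Submodule.subset_span (by simp)))
      (hu _ (Submodule.subset_span (by simp)))
    have hsub := vsub_mem_vectorSpan ℝ hmem hq
    rw [vsub_eq_sub, add_sub_cancel_left] at hsub
    exact (Submodule.smul_mem_iff _ hε.ne').1 hsub

lemma linearIndependent_spatialPart {y z : Fin (n + 1) → ℝ} (hz0 : z 0 ≠ 0)
    (hzi : mink (P.e i) z = 0) (hzj : mink (P.e j) z = 0) (hyi : mink (P.e i) y = 0)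
    (hyj : mink (P.e j) y ≠ 0) :
    LinearIndependent ℝ ![spatialPart n (P.e i), spatialPart n (P.e j)] := by
  rw [LinearIndependent.pair_iff]
  intro a b hab
  have hspatial : spatialPart n (a • P.e i + b • P.e j) = 0 := by
    rw [map_add, map_smul, map_smul, hab]
  have hmink (x : Fin (n + 1) → ℝ) :
      mink (a • P.e i + b • P.e j) x = a * mink (P.e i) x + b * mink (P.e j) x := by
    rw [mink_add_left, mink_smul_left, mink_smul_left]
  have htime : (a • P.e i + b • P.e j) 0 = 0 := by
    have := hmink z
    rw [hzi, hzj, mul_zero, mul_zero, add_zero, mink_eq_inner, hspatial, inner_zero_left, add_zero,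
      neg_eq_zero] at this
    exact (mul_eq_zero.1 this).resolve_right hz0
  have hb : b = 0 := by
    have := hmink y
    rw [eq_zero_of_spatialPart_eq_zero htime hspatial, mink_zero_left, hyi, mul_zero,
      zero_add] at this
    exact (mul_eq_zero.1 this.symm).resolve_right hyj
  rw [hb, zero_smul, add_zero] at hab
  exact ⟨(smul_eq_zero.1 hab).resolve_right (P.spatialPart_e_ne_zero i), hb⟩

lemma sdim_ridge {q : EuclideanSpace ℝ (Fin n)} (hq : q ∈ P.ridge i j)
    (hopen : ∀ u, inner ℝ (spatialPart n (P.e i)) u = 0 → inner ℝ (spatialPart n (P.e j)) u = 0 →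
      ∃ ε : ℝ, 0 < ε ∧ q + ε • u ∈ P.ridge i j)
    (hli : LinearIndependent ℝ ![spatialPart n (P.e i), spatialPart n (P.e j)]) :
    sdim (P.ridge i j) = n - 2 := by
  have hspan := finrank_span_eq_card hli
  have hperp := Submodule.finrank_add_finrank_orthogonal
    (Submodule.span ℝ {spatialPart n (P.e i), spatialPart n (P.e j)})
  rw [Matrix.range_cons_cons_empty, Fintype.card_fin] at hspan
  rw [hspan, finrank_euclideanSpace_fin] at hperp
  rw [sdim, vectorSpan_ridge hq hopen]
  omega

lemma faceInHyperplane_ridge (i j : Fin P.m) : P.faceInHyperplane (P.e i) (P.ridge i j) ∧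
    P.faceInHyperplane (P.e j) (P.ridge i j) :=
  ⟨fun _ hx hmem => (mink_kleinLift_kleinMap_eq_zero_iff hx.1.2 _).1 hmem.2.1,
    fun _ hx hmem => (mink_kleinLift_kleinMap_eq_zero_iff hx.1.2 _).1 hmem.2.2⟩

lemma IsRightAngled.mink_eq_zero_of_ridge_point (hra : P.IsRightAngled) {J : Finset (Fin P.m)}
    (hdef : ∀ x ∈ futureCone n, mink (P.e i) x = 0 → (∀ k ∈ J, mink (P.e k) x ≤ 0) →
      ∀ k, mink (P.e k) x ≤ 0)
    {y z : Fin (n + 1) → ℝ} (hyi : mink (P.e i) y = 0) (hyj : mink (P.e j) y ≠ 0)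
    (hz : z ∈ futureCone n) (hzi : mink (P.e i) z = 0) (hzj : mink (P.e j) z = 0)
    (hzJ : ∀ k ∈ J, k ≠ i → k ≠ j → mink (P.e k) z < 0) :
    mink (P.e i) (P.e j) = 0 := by
  have hij : i ≠ j := by
    rintro rfl
    exact hyj hyi
  have hlift (k : Fin P.m) : mink (P.e k) (kleinLift (kleinMap z)) = (z 0)⁻¹ * mink (P.e k) z := by
    rw [kleinLift_kleinMap hz.2.ne', mink_smul_right]
  have hq := kleinLift_kleinMap_mem_futureCone hz
  have hopen (u : EuclideanSpace ℝ (Fin n)) (hui : inner ℝ (spatialPart n (P.e i)) u = 0)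
      (huj : inner ℝ (spatialPart n (P.e j)) u = 0) :
      ∃ ε : ℝ, 0 < ε ∧ kleinMap z + ε • u ∈ P.ridge i j := by
    obtain ⟨ε, hε, hcl, hzero⟩ := exists_pos_add_smul_mem_cl (A := {i, j})
      (J := (J.erase i).erase j) (u := u)
      (fun x hx hA hJ => hdef x hx (hA i (by simp)) fun k hk => by
        by_cases hk' : k = i ∨ k = j
        · exact (hA k (by simpa using hk')).le
        · exact (hJ k (by simp_all)).le) hq
      (by simp [hlift, hzi, hzj])
      (fun k hk => by
        simp only [Finset.mem_erase] at hk
        rw [hlift]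
        exact mul_neg_of_pos_of_neg (inv_pos.2 hz.2) (hzJ k hk.2.2 hk.2.1 hk.1))
      (by simp [hui, huj])
    exact ⟨ε, hε, hcl, hzero i (by simp), hzero j (by simp)⟩
  have hmem : kleinMap z ∈ P.ridge i j := by
    simpa using (hopen 0 (inner_zero_right _) (inner_zero_right _)).choose_spec.2
  exact hra i j hij ⟨P.ridge i j, ⟨isExposed_ridge i j, ⟨_, hmem⟩,
    sdim_ridge hmem hopen (linearIndependent_spatialPart hz.2.ne' hzi hzj hyi hyj)⟩,
    faceInHyperplane_ridge i j⟩

variable (P) in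
/-- The hyperplanes `H_{eᵢ}`, `i ∈ I`, are those spanned by the facets of `P`, each of them listed
once: together they cut out `P`, and each contains a point of `P` lying on no other. -/
structure FacetSystem (I : Finset (Fin P.m)) : Prop where
  mink_nonpos : ∀ x ∈ futureCone n, (∀ i ∈ I, mink (P.e i) x ≤ 0) → ∀ i, mink (P.e i) x ≤ 0
  exists_point : ∀ i ∈ I, ∃ z ∈ futureCone n, mink (P.e i) z = 0 ∧
    ∀ k ∈ I, k ≠ i → mink (P.e k) z < 0

variable (P) in
lemma exists_facetSystem : ∃ I, P.FacetSystem I := by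
  obtain ⟨p, hp, hpe⟩ := P.exists_forall_mink_neg
  obtain ⟨I, -, hdef, hirr⟩ := exists_irredundant_subsystem (futureCone n)
    (fun i x => mink (P.e i) x) Finset.univ
  refine ⟨I, fun x hx h i => hdef x hx h i (Finset.mem_univ i), fun i hi => ?_⟩
  obtain ⟨x, hx, hxI, hxi⟩ := hirr i hi
  obtain ⟨z, hz, hzi, hzI, -⟩ := exists_facet_point hp hx (fun k _ => hpe k) hi hxI hxi
  exact ⟨z, hz, hzi, hzI⟩

namespace FacetSystem

variable {I : Finset (Fin P.m)}

lemma ne_smul (hI : P.FacetSystem I) (hi : i ∈ I) (hj : j ∈ I) (hij : i ≠ j) (c : ℝ) :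
    P.e i ≠ c • P.e j := by
  intro h
  obtain ⟨z, -, hzj, hzI⟩ := hI.exists_point j hj
  have hneg := hzI i hi hij
  rw [h, mink_smul_left, hzj, mul_zero] at hneg
  exact lt_irrefl _ hneg

lemma exists_orthogonal_subsystem (hI : P.FacetSystem I) (hra : P.IsRightAngled) (hi : i ∈ I) :
    ∃ J : Finset (Fin P.m), (∀ j ∈ J, mink (P.e i) (P.e j) = 0) ∧
      ∀ x ∈ futureCone n, mink (P.e i) x = 0 → (∀ j ∈ J, mink (P.e j) x ≤ 0) →
        ∀ k, mink (P.e k) x ≤ 0 := by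
  obtain ⟨y, hy, hyi, hyI⟩ := hI.exists_point i hi
  obtain ⟨J, hJI, hJ, hirr⟩ := exists_irredundant_subsystem
    {x ∈ futureCone n | mink (P.e i) x = 0} (fun k x => mink (P.e k) x) (I.erase i)
  have hyJ : ∀ j ∈ J, mink (P.e j) y < 0 := fun j hj =>
    hyI j (Finset.mem_of_mem_erase (hJI hj)) (Finset.ne_of_mem_erase (hJI hj))
  have hdef : ∀ x ∈ futureCone n, mink (P.e i) x = 0 → (∀ j ∈ J, mink (P.e j) x ≤ 0) →
      ∀ k, mink (P.e k) x ≤ 0 := fun x hx hxi hxJ => hI.mink_nonpos x hx fun k hk => by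
    rcases eq_or_ne k i with rfl | hki
    · exact hxi.le
    · exact hJ x ⟨hx, hxi⟩ hxJ k (Finset.mem_erase.2 ⟨hki, hk⟩)
  refine ⟨J, fun j hj => ?_, hdef⟩
  obtain ⟨x, ⟨hx, hxi⟩, hxJ, hxj⟩ := hirr j hj
  obtain ⟨z, hz, hzj, hzJ, hzorth⟩ := exists_facet_point hy hx hyJ hj hxJ hxj
  exact hra.mink_eq_zero_of_ridge_point hdef hyi (hyJ j hj).ne hz (hzorth _ hyi hxi) hzj
    fun k hk _ hkj => hzJ k hk hkj

lemma mink_e_nonpos (hI : P.FacetSystem I) (hra : P.IsRightAngled) (hi : i ∈ I) (hj : j ∈ I)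
    (hij : i ≠ j) : mink (P.e i) (P.e j) ≤ 0 := by
  obtain ⟨J, hJorth, hJ⟩ := hI.exists_orthogonal_subsystem hra hj
  obtain ⟨x, hx, hxi, hxI⟩ := hI.exists_point i hi
  have hxj : mink (P.e j) x < 0 := hxI j hj hij.symm
  have hxall : ∀ k, mink (P.e k) x ≤ 0 := hI.mink_nonpos x hx fun k hk => by
    rcases eq_or_ne k i with rfl | hki
    · exact hxi.le
    · exact (hxI k hk hki).le
  have hproj (k : Fin P.m) : mink (P.e k) (minkProj (P.e j) x) =
      mink (P.e k) x - mink (P.e j) x * mink (P.e k) (P.e j) := by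
    rw [mink_minkProj, P.unit, div_one]
  have hpos : 0 < mink (P.e j) (P.e j) := by
    rw [P.unit]
    exact one_pos
  have hle := hJ _ (minkProj_mem_futureCone hpos hx) (mink_self_minkProj hpos.ne' x)
    (fun k hk => by
      rw [hproj, mink_comm (P.e k) (P.e j), hJorth k hk, mul_zero, sub_zero]
      exact hxall k) i
  rw [hproj, hxi, zero_sub, neg_nonpos] at hle
  exact nonpos_of_mul_nonneg_right hle hxj

lemma mink_e_eq_zero (hI : P.FacetSystem I) (hra : P.IsRightAngled) (hi : i ∈ I) (hj : j ∈ I)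
    (hij : i ≠ j) {w : Fin (n + 1) → ℝ} (hw : w ∈ futureCone n) (hwi : mink (P.e i) w = 0)
    (hwj : mink (P.e j) w = 0) : mink (P.e i) (P.e j) = 0 := by
  obtain ⟨y, hy, hyi, hyI⟩ := hI.exists_point i hi
  have hyj : mink (P.e j) y < 0 := hyI j hj hij.symm
  -- The component `f` of `e j` orthogonal to `e i`: projecting `y` along it leads to the ridge.
  set c := mink (P.e i) (P.e j) with hc
  set f := P.e j - c • P.e i with hf
  have hmink (k : Fin P.m) : mink (P.e k) f = mink (P.e k) (P.e j) - c * mink (P.e k) (P.e i) := by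
    rw [hf, mink_sub_right, mink_smul_right]
  have hfx (x : Fin (n + 1) → ℝ) : mink f x = mink (P.e j) x - c * mink (P.e i) x := by
    rw [hf, mink_sub_left, mink_smul_left]
  have hfi : mink (P.e i) f = 0 := by rw [hmink, P.unit, mul_one, ← hc, sub_self]
  have hfj : mink (P.e j) f = mink f f := by rw [hfx f, hfi, mul_zero, sub_zero]
  have hfy : mink f y = mink (P.e j) y := by rw [hfx, hyi, mul_zero, sub_zero]
  have hff : 0 < mink f f := by
    refine mink_self_pos_of_orthogonal hw ?_ fun h0 => ?_
    · rw [mink_comm, hfx, hwi, hwj, mul_zero, sub_zero]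
    · rw [← hfy, h0, mink_zero_left] at hyj
      exact lt_irrefl _ hyj
  refine hra.mink_eq_zero_of_ridge_point (fun x hx _ => hI.mink_nonpos x hx) hyi hyj.ne
    (minkProj_mem_futureCone hff hy) ?_ ?_ fun k hk hki hkj => ?_
  · rw [mink_minkProj, hyi, hfi, mul_zero, sub_zero]
  · rw [mink_minkProj, hfj, div_mul_cancel₀ _ hff.ne', hfy, sub_self]
  · have hkf : mink (P.e k) f ≤ 0 := by
      rw [hmink]
      have := mul_nonneg_of_nonpos_of_nonpos (hI.mink_e_nonpos hra hi hj hij)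
        (hI.mink_e_nonpos hra hk hi hki)
      linarith [hI.mink_e_nonpos hra hk hj hkj]
    have hcoef : mink f y / mink f f ≤ 0 := div_nonpos_of_nonpos_of_nonneg (hfy ▸ hyj.le) hff.le
    rw [mink_minkProj]
    linarith [hyI k hk hki, mul_nonneg_of_nonpos_of_nonpos hcoef hkf]

end FacetSystem

end HypPolyhedron

/-! ### Right-angled cones and their polygons -/

section Cone

variable {n : ℕ} {ι : Type*} [Fintype ι] {e : ι → Fin (n + 1) → ℝ}
  {G : Finset (Fin (n + 1) → ℝ)} {T : Finset ι} {u v w : Fin (n + 1) → ℝ} {i j k l : ι}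

open Classical in
/-- The indices of the hyperplanes through `w`. -/
def activeSet (e : ι → Fin (n + 1) → ℝ) (w : Fin (n + 1) → ℝ) : Finset ι :=
  {i | mink (e i) w = 0}

lemma mem_activeSet : i ∈ activeSet e w ↔ mink (e i) w = 0 := by
  simp [activeSet]

open Classical in
/-- The timelike vectors among the generators `G` of a cone: the finite vertices. -/
def timelike (G : Finset (Fin (n + 1) → ℝ)) : Finset (Fin (n + 1) → ℝ) := {w ∈ G | mink w w < 0}

lemma mem_timelike : w ∈ timelike G ↔ w ∈ G ∧ mink w w < 0 := by
  simp [timelike]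

open Classical in
/-- The lightlike vectors among the generators `G` of a cone: the ideal vertices. -/
def lightlike (G : Finset (Fin (n + 1) → ℝ)) : Finset (Fin (n + 1) → ℝ) := {w ∈ G | mink w w = 0}

lemma mem_lightlike : w ∈ lightlike G ↔ w ∈ G ∧ mink w w = 0 := by
  simp [lightlike]

open Classical in
/-- The finite vertices of the face cut out by the hyperplanes with index in `T`. The face is a
polygon when `T` has `n - 2` elements and some finite vertex lies on it. -/
def polygonVerts (e : ι → Fin (n + 1) → ℝ) (G : Finset (Fin (n + 1) → ℝ)) (T : Finset ι) :
    Finset (Fin (n + 1) → ℝ) :=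
  {w ∈ timelike G | T ⊆ activeSet e w}

lemma mem_polygonVerts : w ∈ polygonVerts e G T ↔ w ∈ timelike G ∧ T ⊆ activeSet e w := by
  simp [polygonVerts]

/-- The cone over a finite-volume right-angled hyperbolic polyhedron with facet normals `e i`. It
is generated by the vertices `G`, normalised to time coordinate `1`; those in hyperbolic space lie
on exactly `n` facets, which are mutually orthogonal. -/
structure RightAngledCone (e : ι → Fin (n + 1) → ℝ) (G : Finset (Fin (n + 1) → ℝ)) : Prop where
  unit : ∀ i, mink (e i) (e i) = 1
  ne_smul : ∀ i j, i ≠ j → ∀ c : ℝ, e i ≠ c • e j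
  time : ∀ w ∈ G, w 0 = 1
  causal : ∀ w ∈ G, mink w w ≤ 0
  nonpos : ∀ w ∈ G, ∀ i, mink (e i) w ≤ 0
  card : ∀ w ∈ timelike G, (activeSet e w).card = n
  orth : ∀ w ∈ timelike G, (activeSet e w : Set ι).Pairwise fun i j => mink (e i) (e j) = 0
  gen : ∀ x ∈ futureCone n, (∀ i, mink (e i) x ≤ 0) →
    ∃ c : (Fin (n + 1) → ℝ) → ℝ, (∀ w ∈ G, 0 ≤ c w) ∧ x = ∑ w ∈ G, c w • w
  nonempty : ∃ x ∈ futureCone n, ∀ i, mink (e i) x ≤ 0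

/-- `w` is a finite vertex of the polygonal face `T`, whose two sides at `w` lie in the hyperplanes
`i` and `j`. -/
structure IsPolygonCorner (e : ι → Fin (n + 1) → ℝ) (G : Finset (Fin (n + 1) → ℝ)) (T : Finset ι)
    (w : Fin (n + 1) → ℝ) (i j : ι) : Prop where
  mem : w ∈ timelike G
  mem_iff : ∀ k, k ∈ activeSet e w ↔ k = i ∨ k = j ∨ k ∈ T
  ne : i ≠ j
  left : i ∉ T
  right : j ∉ T

namespace IsPolygonCorner

lemma symm (hw : IsPolygonCorner e G T w i j) : IsPolygonCorner e G T w j i :=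
  ⟨hw.mem, fun k => by rw [hw.mem_iff, or_left_comm], hw.ne.symm, hw.right, hw.left⟩

lemma left_mem (hw : IsPolygonCorner e G T w i j) : i ∈ activeSet e w :=
  (hw.mem_iff i).2 (Or.inl rfl)

lemma subset (hw : IsPolygonCorner e G T w i j) : T ⊆ activeSet e w :=
  fun k hk => (hw.mem_iff k).2 (Or.inr (Or.inr hk))

lemma mem_polygonVerts (hw : IsPolygonCorner e G T w i j) : w ∈ polygonVerts e G T :=
  _root_.mem_polygonVerts.2 ⟨hw.mem, hw.subset⟩

lemma ne_of_side (hw : IsPolygonCorner e G T w i j) (hu : IsPolygonCorner e G T u k l)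
    (hik : i ≠ k) (hil : i ≠ l) : w ≠ u := by
  rintro rfl
  rcases (hu.mem_iff i).1 hw.left_mem with h | h | h
  exacts [hik h, hil h, hw.left h]

end IsPolygonCorner

namespace RightAngledCone

lemma mem_futureCone (h : RightAngledCone e G) (hw : w ∈ timelike G) : w ∈ futureCone n := by
  obtain ⟨hwG, hww⟩ := mem_timelike.1 hw
  exact ⟨hww, by rw [h.time w hwG]; exact one_pos⟩

lemma mink_neg (h : RightAngledCone e G) (hw : w ∈ timelike G) (hu : u ∈ G) : mink w u < 0 :=
  mink_neg_of_mem_futureCone (h.mem_futureCone hw) (h.causal u hu)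
    (by rw [h.time u hu]; exact one_pos)

lemma expansion (h : RightAngledCone e G) (hw : w ∈ timelike G) (x : Fin (n + 1) → ℝ) :
    ∃ c : ℝ, x = ∑ k ∈ activeSet e w, mink x (e k) • e k + c • w := by
  obtain ⟨c, hc⟩ := exists_eq_sum_add_smul (b := fun k : activeSet e w => e k)
    (h.mem_futureCone hw) (fun k => h.unit k)
    (fun k l hkl => h.orth w hw k.2 l.2 fun hkl' => hkl (Subtype.ext hkl'))
    (fun k => (mink_comm _ _).trans (mem_activeSet.1 k.2)) (by simp [h.card w hw]) x
  exact ⟨c, by rwa [← Finset.sum_coe_sort (activeSet e w)]⟩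

lemma exists_pos_edge (h : RightAngledCone e G) (hw : w ∈ timelike G) (hi : i ∈ activeSet e w) :
    ∃ ε : ℝ, 0 < ε ∧ w - ε • e i ∈ futureCone n ∧ ∀ k, mink (e k) (w - ε • e i) ≤ 0 := by
  classical
  obtain ⟨ε, hε, hmem, hneg⟩ := exists_pos_add_smul_mem_futureCone (e := e)
    (J := (activeSet e w)ᶜ) (h.mem_futureCone hw)
    (fun k hk => lt_of_le_of_ne (h.nonpos w (mem_timelike.1 hw).1 k) (by
      rwa [Finset.mem_compl, mem_activeSet] at hk)) (-e i)
  rw [smul_neg, ← sub_eq_add_neg] at hmem hneg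
  refine ⟨ε, hε, hmem, fun k => ?_⟩
  by_cases hk : k ∈ activeSet e w
  · rw [mink_sub_right, mem_activeSet.1 hk, mink_smul_right, zero_sub, neg_nonpos]
    rcases eq_or_ne k i with rfl | hki
    · rw [h.unit, mul_one]
      exact hε.le
    · rw [h.orth w hw hk hi hki, mul_zero]
  · exact (hneg k (Finset.mem_compl.2 hk)).le

lemma exists_neighbor (h : RightAngledCone e G) (hw : w ∈ timelike G) (hi : i ∈ activeSet e w) :
    ∃ u ∈ G, (∀ k ∈ activeSet e w, k ≠ i → mink (e k) u = 0) ∧ mink (e i) u < 0 := by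
  obtain ⟨ε, hε, hx, hxe⟩ := h.exists_pos_edge hw hi
  obtain ⟨c, hc, hsum⟩ := h.gen _ hx hxe
  have hval : ∀ k ∈ activeSet e w, ∑ u ∈ G, c u * mink (e k) u = -(ε * mink (e k) (e i)) := by
    intro k hk
    have := congrArg (mink (e k)) hsum
    rw [mink_sub_right, mem_activeSet.1 hk, mink_smul_right, zero_sub, mink_sum_right] at this
    simpa only [mink_smul_right] using this.symm
  obtain ⟨u, hu, hneg⟩ : ∃ u ∈ G, c u * mink (e i) u < 0 := by
    refine Finset.exists_lt_of_sum_lt ?_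
    rw [hval i hi, h.unit, mul_one, Finset.sum_const_zero]
    exact neg_neg_of_pos hε
  have hcu : c u ≠ 0 := left_ne_zero_of_mul hneg.ne
  refine ⟨u, hu, fun k hk hki => ?_,
    lt_of_le_of_ne (h.nonpos u hu i) (right_ne_zero_of_mul hneg.ne)⟩
  have hzero := hval k hk
  rw [h.orth w hw hk hi hki, mul_zero, neg_zero, Finset.sum_eq_zero_iff_of_nonpos fun u hu =>
    mul_nonpos_of_nonneg_of_nonpos (hc u hu) (h.nonpos u hu k)] at hzero
  exact (mul_eq_zero.1 (hzero u hu)).resolve_left hcu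

lemma exists_isPolygonCorner_of_mem (h : RightAngledCone e G) (hT : T.card + 2 = n)
    (hw : w ∈ timelike G) (hTw : T ⊆ activeSet e w) (hi : i ∈ activeSet e w) (hiT : i ∉ T) :
    ∃ j, IsPolygonCorner e G T w i j := by
  classical
  have hsub : insert i T ⊆ activeSet e w := Finset.insert_subset hi hTw
  have hcard : (activeSet e w \ insert i T).card = 1 := by
    rw [Finset.card_sdiff_of_subset hsub, h.card w hw, Finset.card_insert_of_notMem hiT]
    lia
  obtain ⟨j, hj⟩ := Finset.card_eq_one.1 hcard
  have hj' (k : ι) : k ∈ activeSet e w ∧ k ≠ i ∧ k ∉ T ↔ k = j := by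
    simpa using Finset.ext_iff.1 hj k
  obtain ⟨-, hji, hjT⟩ := (hj' j).2 rfl
  refine ⟨j, hw, fun k => ⟨fun hk => ?_, ?_⟩, hji.symm, hiT, hjT⟩
  · by_contra! hne
    exact hne.2.1 ((hj' k).1 ⟨hk, hne.1, hne.2.2⟩)
  · rintro (rfl | rfl | hk)
    exacts [hi, ((hj' k).2 rfl).1, hTw hk]

lemma exists_isPolygonCorner (h : RightAngledCone e G) (hT : T.card + 2 = n)
    (hw : w ∈ polygonVerts e G T) : ∃ i j, IsPolygonCorner e G T w i j := by
  obtain ⟨hwG, hTw⟩ := mem_polygonVerts.1 hw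
  obtain ⟨i, hi, hiT⟩ : ∃ i ∈ activeSet e w, i ∉ T :=
    Finset.exists_mem_notMem_of_card_lt_card (by rw [h.card w hwG]; lia)
  exact ⟨i, h.exists_isPolygonCorner_of_mem hT hwG hTw hi hiT⟩

lemma exists_next (h : RightAngledCone e G) (hT : T.card + 2 = n)
    (hw : IsPolygonCorner e G T w i j) :
    (∃ u k, IsPolygonCorner e G T u j k ∧ k ≠ i) ∨
      ∃ v ∈ lightlike G, (∀ k ∈ T, mink (e k) v = 0) ∧ mink (e j) v = 0 ∧ mink (e i) v < 0 := by
  obtain ⟨u, hu, hzero, hui⟩ := h.exists_neighbor hw.mem hw.left_mem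
  have huT : ∀ k ∈ T, mink (e k) u = 0 := fun k hk =>
    hzero k (hw.subset hk) fun hki => hw.left (hki ▸ hk)
  have huj : mink (e j) u = 0 := hzero j hw.symm.left_mem hw.ne.symm
  rcases (h.causal u hu).lt_or_eq with huu | huu
  · obtain ⟨k, hk⟩ := h.exists_isPolygonCorner_of_mem hT (mem_timelike.2 ⟨hu, huu⟩)
      (fun k hk => mem_activeSet.2 (huT k hk)) (mem_activeSet.2 huj) hw.right
    refine Or.inl ⟨u, k, hk, ?_⟩
    rintro rfl
    exact hui.ne (mem_activeSet.1 hk.symm.left_mem)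
  · exact Or.inr ⟨u, mem_lightlike.2 ⟨hu, huu⟩, huT, huj, hui⟩

lemma mink_sides (h : RightAngledCone e G) (hw : IsPolygonCorner e G T w i j) :
    mink (e i) (e j) = 0 :=
  h.orth w hw.mem hw.left_mem hw.symm.left_mem hw.ne

lemma exists_opposite_side_eq (h : RightAngledCone e G) (hw : IsPolygonCorner e G T w i j)
    (hu : IsPolygonCorner e G T u j k) : ∃ c : ℝ, e k = mink (e k) (e i) • e i + c • w := by
  classical
  obtain ⟨c, hc⟩ := h.expansion hw.mem (e k)
  refine ⟨c, ?_⟩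
  rwa [Finset.sum_eq_single_of_mem i hw.left_mem fun l hl hli => ?_] at hc
  have hlk : mink (e k) (e l) = 0 := by
    rcases (hw.mem_iff l).1 hl with rfl | rfl | hlT
    · exact absurd rfl hli
    · exact h.mink_sides hu.symm
    · exact h.orth u hu.mem hu.symm.left_mem (hu.subset hlT) fun hkl => hu.right (hkl ▸ hlT)
  rw [hlk, zero_smul]

lemma not_triangle (h : RightAngledCone e G) (hw : IsPolygonCorner e G T w i j)
    (hu : IsPolygonCorner e G T u j k) : mink (e i) (e k) ≠ 0 := by
  intro hik
  obtain ⟨c, hc⟩ := h.exists_opposite_side_eq hw hu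
  rw [mink_comm, hik, zero_smul, zero_add] at hc
  have hunit := h.unit k
  rw [hc, mink_smul_left, mink_smul_right] at hunit
  nlinarith [(mem_timelike.1 hw.mem).2, mul_self_nonneg c]

lemma not_quadrilateral (h : RightAngledCone e G) (hu : IsPolygonCorner e G T u i j)
    (hw : IsPolygonCorner e G T w j k) (hv : IsPolygonCorner e G T v k l)
    (hik : i ≠ k) (hjl : j ≠ l) :
    mink (e i) (e l) ≠ 0 := by
  obtain ⟨c, hc⟩ := h.exists_opposite_side_eq hw.symm hu.symm
  obtain ⟨d, hd⟩ := h.exists_opposite_side_eq hw hv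
  have hwj : mink (e j) w = 0 := mem_activeSet.1 hw.left_mem
  have hwk : mink (e k) w = 0 := mem_activeSet.1 hw.symm.left_mem
  have hil : mink (e i) (e l) = c * (d * mink w w) := by
    rw [hc, hd]
    simp only [mink_add_left, mink_add_right, mink_smul_left, mink_smul_right, mink_comm w, hwj,
      hwk, h.mink_sides hw.symm, mul_zero, zero_add, add_zero]
    ring
  have hc0 : c ≠ 0 := by
    rintro rfl
    rw [zero_smul, add_zero] at hc
    exact h.ne_smul i k hik _ hc
  have hd0 : d ≠ 0 := by
    rintro rfl
    rw [zero_smul, add_zero] at hd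
    exact h.ne_smul l j hjl.symm _ hd
  rw [hil]
  exact mul_ne_zero hc0 (mul_ne_zero hd0 (mem_timelike.1 hw.mem).2.ne)

lemma mink_opposite_side_ne_zero (h : RightAngledCone e G) (hw : IsPolygonCorner e G T w i j)
    (hu : IsPolygonCorner e G T u j k) (hik : i ≠ k) (hv : v ∈ G) (hvi : mink (e i) v = 0) :
    mink (e k) v ≠ 0 := by
  intro hvk
  obtain ⟨c, hc⟩ := h.exists_opposite_side_eq hw hu
  have hcw : c * mink w v = 0 := by
    rw [hc, mink_add_left, mink_smul_left, mink_smul_left, hvi, mul_zero, zero_add] at hvk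
    exact hvk
  rw [(mul_eq_zero.1 hcw).resolve_right (h.mink_neg hw.mem hv).ne, zero_smul, add_zero] at hc
  exact h.ne_smul k i hik.symm _ hc

lemma three_le_card_polygonVerts_of_adjacent (h : RightAngledCone e G) (hT : T.card + 2 = n)
    (hG : (lightlike G).card ≤ 1) (hw : IsPolygonCorner e G T w i j)
    (hu : IsPolygonCorner e G T u j k) (hki : k ≠ i) : 3 ≤ (polygonVerts e G T).card := by
  have hwu : w ≠ u := hw.ne_of_side hu hw.ne hki.symm
  rcases h.exists_next hT hu with ⟨t, l, ht, hlj⟩ | ⟨v, hv, -, hvk, -⟩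
  · exact Finset.two_lt_card.2 ⟨w, hw.mem_polygonVerts, u, hu.mem_polygonVerts,
      t, ht.mem_polygonVerts, hwu, hw.symm.ne_of_side ht hu.ne hlj.symm,
      hu.ne_of_side ht hu.ne hlj.symm⟩
  rcases h.exists_next hT hw.symm with ⟨t, l, ht, hlj⟩ | ⟨v', hv', -, hvi, -⟩
  · exact Finset.two_lt_card.2 ⟨w, hw.mem_polygonVerts, u, hu.mem_polygonVerts,
      t, ht.mem_polygonVerts, hwu, hw.symm.ne_of_side ht hw.ne.symm hlj.symm,
      hu.ne_of_side ht hw.ne.symm hlj.symm⟩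
  · rw [Finset.card_le_one.1 hG v' hv' v hv] at hvi
    exact absurd hvk
      (h.mink_opposite_side_ne_zero hw hu hki.symm (mem_lightlike.1 hv).1 hvi)

lemma three_le_card_polygonVerts (h : RightAngledCone e G) (hT : T.card + 2 = n)
    (hG : (lightlike G).card ≤ 1) (hw : w ∈ polygonVerts e G T) :
    3 ≤ (polygonVerts e G T).card := by
  obtain ⟨i, j, hw⟩ := h.exists_isPolygonCorner hT hw
  rcases h.exists_next hT hw with ⟨u, k, hu, hki⟩ | ⟨v, hv, -, -, hvi⟩
  · exact h.three_le_card_polygonVerts_of_adjacent hT hG hw hu hki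
  rcases h.exists_next hT hw.symm with ⟨u, k, hu, hkj⟩ | ⟨v', hv', -, hvi', -⟩
  · exact h.three_le_card_polygonVerts_of_adjacent hT hG hw.symm hu hkj
  · exact absurd hvi' (Finset.card_le_one.1 hG v hv v' hv' ▸ hvi.ne)

lemma five_le_card_polygonVerts (h : RightAngledCone e G) (hT : T.card + 2 = n)
    (hG : ∀ v ∈ lightlike G, ∃ k ∈ T, mink (e k) v ≠ 0) (hw : w ∈ polygonVerts e G T) :
    5 ≤ (polygonVerts e G T).card := by
  classical
  have next {w i j} (hw : IsPolygonCorner e G T w i j) :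
      ∃ u k, IsPolygonCorner e G T u j k ∧ k ≠ i :=
    (h.exists_next hT hw).resolve_right fun ⟨v, hv, hvT, _⟩ =>
      let ⟨k, hk, hne⟩ := hG v hv
      hne (hvT k hk)
  obtain ⟨s₀, s₁, h₀⟩ := h.exists_isPolygonCorner hT hw
  obtain ⟨w₁, s₂, h₁, h₀₂⟩ := next h₀
  obtain ⟨w₂, s₃, h₂, h₁₃⟩ := next h₁
  obtain ⟨w₃, s₄, h₃, h₂₄⟩ := next h₂
  obtain ⟨w₄, s₅, h₄, h₃₅⟩ := next h₃
  have h₁₄ : s₁ ≠ s₄ := by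
    rintro rfl
    exact h.not_triangle h₁ h₂ (h.mink_sides h₃.symm)
  have h₂₅ : s₂ ≠ s₅ := by
    rintro rfl
    exact h.not_triangle h₂ h₃ (h.mink_sides h₄.symm)
  have h₁₅ : s₁ ≠ s₅ := by
    rintro rfl
    exact h.not_quadrilateral h₁ h₂ h₃ h₁₃.symm h₂₄.symm (h.mink_sides h₄.symm)
  have hsub : ({w, w₁, w₂, w₃, w₄} : Finset (Fin (n + 1) → ℝ)) ⊆ polygonVerts e G T := by
    simp only [Finset.insert_subset_iff, Finset.singleton_subset_iff]
    exact ⟨hw, h₁.mem_polygonVerts, h₂.mem_polygonVerts, h₃.mem_polygonVerts, h₄.mem_polygonVerts⟩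
  refine le_of_eq_of_le ?_ (Finset.card_le_card hsub)
  simp [h₀.ne_of_side h₁ h₀.ne h₀₂.symm, h₀.symm.ne_of_side h₂ h₁.ne h₁₃.symm,
    h₀.symm.ne_of_side h₃ h₁₃.symm h₁₄, h₀.symm.ne_of_side h₄ h₁₄ h₁₅,
    h₁.ne_of_side h₂ h₁.ne h₁₃.symm, h₁.symm.ne_of_side h₃ h₂.ne h₂₄.symm,
    h₁.symm.ne_of_side h₄ h₂₄.symm h₂₅, h₂.ne_of_side h₃ h₂.ne h₂₄.symm,
    h₂.symm.ne_of_side h₄ h₃.ne h₃₅.symm, h₃.ne_of_side h₄ h₃.ne h₃₅.symm]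

end RightAngledCone

end Cone

/-! ### Counting vertices and polygonal faces -/

section Counting

variable {α ι : Type*}

lemma choose_card_filter_le_card_filter_powersetCard {A : Finset ι} {n : ℕ} (hA : A.card = n)
    (p : ι → Prop) [DecidablePred p]
    [DecidablePred fun T : Finset ι => ∀ k ∈ A, k ∉ T → p k] (m : ℕ) :
    {k ∈ A | p k}.card.choose m ≤
      {T ∈ A.powersetCard (n - m) | ∀ k ∈ A, k ∉ T → p k}.card := by
  classical
  rw [← Finset.card_powersetCard]
  have hsub {S} (hS : S ∈ Finset.powersetCard m {k ∈ A | p k}) : S ⊆ A :=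
    (Finset.mem_powersetCard.1 hS).1.trans (Finset.filter_subset _ _)
  refine Finset.card_le_card_of_injOn (A \ ·) (fun S hS => ?_) fun S hS S' hS' hSS' => ?_
  · obtain ⟨hSp, hSm⟩ := Finset.mem_powersetCard.1 hS
    refine Finset.mem_filter.2 ⟨Finset.mem_powersetCard.2 ⟨Finset.sdiff_subset, ?_⟩, ?_⟩
    · rw [Finset.card_sdiff_of_subset (hsub hS), hSm, hA]
    · intro k hkA hk
      have hkS : k ∈ S := by_contra fun hkS => hk (Finset.mem_sdiff.2 ⟨hkA, hkS⟩)
      exact (Finset.mem_filter.1 (hSp hkS)).2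
  · rw [← Finset.sdiff_sdiff_eq_self (hsub hS), ← Finset.sdiff_sdiff_eq_self (hsub hS')]
    exact congrArg (A \ ·) hSS'

lemma two_mul_choose_two_le {u d : ℕ} (h : 5 ≤ u + d) :
    2 * (u + d).choose 2 ≤ 5 * (u.choose 2 + d.choose 2) := by
  suffices 2 * ((u + d : ℚ) * (u + d - 1)) ≤ 5 * (u * (u - 1) + d * (d - 1)) by
    have hle : (2 * (u + d).choose 2 : ℚ) ≤ 5 * (u.choose 2 + d.choose 2) := by
      rw [Nat.cast_choose_two, Nat.cast_choose_two, Nat.cast_choose_two]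
      push_cast
      linarith
    exact_mod_cast hle
  rcases h.eq_or_lt with h | h
  · obtain rfl : d = 5 - u := by lia
    have hu : u ≤ 5 := by lia
    interval_cases u <;> norm_num
  · have h : (6 : ℚ) ≤ u + d := by exact_mod_cast h
    nlinarith [sq_nonneg ((u : ℚ) - d)]

variable [Fintype ι] [DecidableEq ι]

lemma sum_card_filter_powersetCard (V : Finset α) (A : α → Finset ι) (m : ℕ)
    (r : α → Finset ι → Prop) [∀ w T, Decidable (r w T)] :
    ∑ w ∈ V, {T ∈ (A w).powersetCard m | r w T}.card =
      ∑ T ∈ Finset.univ.powersetCard m, {w ∈ V | T ⊆ A w ∧ r w T}.card := by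
  refine Eq.trans (Finset.sum_congr rfl fun w _ => congrArg Finset.card (Finset.ext fun T => ?_))
    (Finset.sum_card_bipartiteAbove_eq_sum_card_bipartiteBelow fun w T => T ⊆ A w ∧ r w T)
  simp only [Finset.mem_filter, Finset.mem_powersetCard, Finset.bipartiteAbove,
    Finset.subset_univ, true_and]
  tauto

lemma exists_two_mul_card_filter_lt {n : ℕ} (hn : 5 ≤ n) {V : Finset α}
    {A : α → Finset ι} (hA : ∀ w ∈ V, (A w).card = n) (p : α → ι → Prop)
    [∀ w, DecidablePred (p w)] (hbot : ∃ w ∈ V, ∀ k ∈ A w, p w k) :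
    ∃ T : Finset ι, T.card + 2 = n ∧ 2 * {w ∈ V | T ⊆ A w}.card <
      5 * ({w ∈ V | T ⊆ A w ∧ ∀ k ∈ A w, k ∉ T → p w k}.card +
        {w ∈ V | T ⊆ A w ∧ ∀ k ∈ A w, k ∉ T → ¬p w k}.card) := by
  have hcard : ∀ w ∈ V, ((A w).powersetCard (n - 2)).card = n.choose 2 := fun w hw => by
    rw [Finset.card_powersetCard, hA w hw, Nat.choose_symm (by lia)]
  have hle : ∀ w ∈ V,
      2 * ((A w).powersetCard (n - 2)).card ≤
        5 * ({T ∈ (A w).powersetCard (n - 2) | ∀ k ∈ A w, k ∉ T → p w k}.card +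
          {T ∈ (A w).powersetCard (n - 2) | ∀ k ∈ A w, k ∉ T → ¬p w k}.card) := by
    intro w hw
    have hsplit := Finset.card_filter_add_card_filter_not (s := A w) (p w)
    rw [hA w hw] at hsplit
    have h5 := two_mul_choose_two_le (hn.trans_eq hsplit.symm)
    rw [hsplit, ← hcard w hw] at h5
    exact h5.trans (Nat.mul_le_mul_left 5 (add_le_add
      (choose_card_filter_le_card_filter_powersetCard (hA w hw) _ 2)
      (choose_card_filter_le_card_filter_powersetCard (hA w hw) _ 2)))
  obtain ⟨b, hb, hpb⟩ := hbot
  have hlt : 2 * ((A b).powersetCard (n - 2)).card <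
      5 * ({T ∈ (A b).powersetCard (n - 2) | ∀ k ∈ A b, k ∉ T → p b k}.card +
        {T ∈ (A b).powersetCard (n - 2) | ∀ k ∈ A b, k ∉ T → ¬p b k}.card) := by
    have hpos : 0 < n.choose 2 := Nat.choose_pos (by lia)
    have hall := choose_card_filter_le_card_filter_powersetCard (hA b hb) (p b) 2
    rw [Finset.filter_true_of_mem hpb, hA b hb] at hall
    rw [hcard b hb]
    lia
  have hsum := Finset.sum_lt_sum hle ⟨b, hb, hlt⟩
  have hincidence := sum_card_filter_powersetCard V A (n - 2) fun _ _ => True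
  simp only [Finset.filter_true, and_true] at hincidence
  rw [← Finset.mul_sum, ← Finset.mul_sum, Finset.sum_add_distrib, hincidence,
    sum_card_filter_powersetCard, sum_card_filter_powersetCard, ← Finset.sum_add_distrib,
    Finset.mul_sum, Finset.mul_sum] at hsum
  obtain ⟨T, hT, hTlt⟩ := Finset.exists_lt_of_sum_lt hsum
  exact ⟨T, by rw [(Finset.mem_powersetCard.1 hT).2]; lia, hTlt⟩

end Counting

/-! ### Linear-fractional functions on a right-angled cone -/

section Tilt

variable {M : Type*} [AddCommGroup M] [Module ℝ M]

/-- The derivative at `w` of the linear-fractional function `a / f`, multiplied by `(f w)²` in order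
to avoid the division. -/
def tilt (a f : Module.Dual ℝ M) (w : M) : Module.Dual ℝ M :=
  f w • a - a w • f

lemma tilt_apply (a f : Module.Dual ℝ M) (w x : M) : tilt a f w x = f w * a x - a w * f x := rfl

lemma tilt_self (a f : Module.Dual ℝ M) (w : M) : tilt a f w w = 0 := by
  rw [tilt_apply, mul_comm, sub_self]

lemma tilt_neg_left (a f : Module.Dual ℝ M) (w x : M) : tilt (-a) f w x = -tilt a f w x := by
  simp only [tilt_apply, LinearMap.neg_apply]
  ring

lemma tilt_antisymm (a f : Module.Dual ℝ M) (w x : M) : tilt a f w x = -tilt a f x w := by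
  simp only [tilt_apply]
  ring

end Tilt

section Objective

variable {n : ℕ} {ι : Type*} [Fintype ι] {e : ι → Fin (n + 1) → ℝ}
  {G : Finset (Fin (n + 1) → ℝ)} {T : Finset ι} {u v w : Fin (n + 1) → ℝ} {k : ι}
  {a f : Module.Dual ℝ (Fin (n + 1) → ℝ)}

open Classical in
/-- The finite vertices of the face `T` at which the linear-fractional function `a / f` increases
along every edge of the face. The edge of the cone that leaves the hyperplane `k` at `w` points in
the direction `-e k`, hence the sign. Local maxima are local minima of `-a / f`. -/
def localMins (e : ι → Fin (n + 1) → ℝ) (G : Finset (Fin (n + 1) → ℝ))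
    (a f : Module.Dual ℝ (Fin (n + 1) → ℝ)) (T : Finset ι) : Finset (Fin (n + 1) → ℝ) :=
  {w ∈ polygonVerts e G T | ∀ k ∈ activeSet e w, k ∉ T → tilt a f w (e k) < 0}

lemma mem_localMins : w ∈ localMins e G a f T ↔ w ∈ polygonVerts e G T ∧
    ∀ k ∈ activeSet e w, k ∉ T → tilt a f w (e k) < 0 := by
  simp [localMins]

namespace RightAngledCone

lemma tilt_expansion (h : RightAngledCone e G) (hw : w ∈ timelike G) (x : Fin (n + 1) → ℝ) :
    tilt a f w x = ∑ k ∈ activeSet e w, mink (e k) x * tilt a f w (e k) := by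
  obtain ⟨c, hc⟩ := h.expansion hw x
  conv_lhs => rw [hc]
  simp only [map_add, map_sum, map_smul, tilt_self, smul_eq_mul, mul_zero, add_zero, mink_comm x]

lemma mink_mul_tilt_nonneg (h : RightAngledCone e G) (hw : w ∈ localMins e G a f T) (hu : u ∈ G)
    (huT : T ⊆ activeSet e u) (hk : k ∈ activeSet e w) :
    0 ≤ mink (e k) u * tilt a f w (e k) := by
  by_cases hkT : k ∈ T
  · rw [mem_activeSet.1 (huT hkT), zero_mul]
  · exact mul_nonneg_of_nonpos_of_nonpos (h.nonpos u hu k)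
      ((mem_localMins.1 hw).2 k hk hkT).le

lemma eq_of_mem_localMins (h : RightAngledCone e G) (hw : w ∈ localMins e G a f T)
    (hu : u ∈ localMins e G a f T) : u = w := by
  obtain ⟨hwV, hwT⟩ := mem_polygonVerts.1 (mem_localMins.1 hw).1
  obtain ⟨huV, huT⟩ := mem_polygonVerts.1 (mem_localMins.1 hu).1
  have huG := (mem_timelike.1 huV).1
  have hwG := (mem_timelike.1 hwV).1
  have hterm (k) (hk : k ∈ activeSet e w) := h.mink_mul_tilt_nonneg hw huG huT hk
  have hsum : ∑ k ∈ activeSet e w, mink (e k) u * tilt a f w (e k) = 0 := by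
    refine le_antisymm ?_ (Finset.sum_nonneg hterm)
    rw [← h.tilt_expansion hwV, tilt_antisymm, h.tilt_expansion huV, neg_nonpos]
    exact Finset.sum_nonneg fun k hk => h.mink_mul_tilt_nonneg hu hwG hwT hk
  obtain ⟨c, hc⟩ := h.expansion hwV u
  have hmink : ∀ k ∈ activeSet e w, mink (e k) u = 0 := by
    intro k hk
    by_cases hkT : k ∈ T
    · exact mem_activeSet.1 (huT hkT)
    · exact (mul_eq_zero.1 ((Finset.sum_eq_zero_iff_of_nonneg hterm).1 hsum k hk)).resolve_right
        ((mem_localMins.1 hw).2 k hk hkT).ne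
  rw [Finset.sum_eq_zero fun k hk => by rw [mink_comm, hmink k hk, zero_smul], zero_add] at hc
  have hc0 := congrFun hc 0
  rw [Pi.smul_apply, h.time w hwG, h.time u huG, smul_eq_mul, mul_one] at hc0
  rw [hc, ← hc0, one_smul]

lemma card_localMins_le_one (h : RightAngledCone e G) : (localMins e G a f T).card ≤ 1 :=
  Finset.card_le_one.2 fun _ hw _ hu => h.eq_of_mem_localMins hu hw

lemma localMins_neg_eq_empty (h : RightAngledCone e G) (hv : v ∈ G)
    (hvT : ∀ k ∈ T, mink (e k) v = 0) (hfv : f v = 0) (hav : 0 < a v)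
    (hf : ∀ w ∈ timelike G, 0 < f w) : localMins e G (-a) f T = ∅ := by
  refine Finset.eq_empty_of_forall_notMem fun w hw => ?_
  have hwV := (mem_polygonVerts.1 (mem_localMins.1 hw).1).1
  have hpos : 0 < tilt a f w v := by
    rw [tilt_apply, hfv, mul_zero, sub_zero]
    exact mul_pos (hf w hwV) hav
  have hnonneg : 0 ≤ tilt (-a) f w v := by
    rw [h.tilt_expansion hwV]
    exact Finset.sum_nonneg fun k hk =>
      h.mink_mul_tilt_nonneg hw hv (fun k hk => mem_activeSet.2 (hvT k hk)) hk
  rw [tilt_neg_left] at hnonneg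
  linarith

lemma nonempty_timelike (h : RightAngledCone e G) (hG : (lightlike G).card ≤ 1) :
    (timelike G).Nonempty := by
  by_contra! hempty
  have hnull : ∀ w ∈ G, w ∈ lightlike G := fun w hw => mem_lightlike.2 ⟨hw,
    (h.causal w hw).eq_of_not_lt fun hww => by simpa [hempty] using mem_timelike.2 ⟨hw, hww⟩⟩
  obtain ⟨x, hx, hxe⟩ := h.nonempty
  obtain ⟨c, -, hsum⟩ := h.gen x hx hxe
  have hxx : mink x x = 0 := by
    rw [hsum, mink_sum_right]
    refine Finset.sum_eq_zero fun w hw => ?_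
    rw [mink_comm, mink_sum_right]
    refine Finset.sum_eq_zero fun u hu => ?_
    rw [Finset.card_le_one.1 hG u (hnull u hu) w (hnull w hw), mink_smul_left, mink_smul_right,
      (mem_lightlike.1 (hnull w hw)).2, mul_zero, mul_zero]
  exact hx.1.ne hxx

lemma exists_dual_pos (h : RightAngledCone e G) (hG : (lightlike G).card ≤ 1) :
    ∃ f : Module.Dual ℝ (Fin (n + 1) → ℝ),
      (∀ w ∈ timelike G, 0 < f w) ∧ ∀ v ∈ lightlike G, f v = 0 := by
  rcases (lightlike G).eq_empty_or_nonempty with hempty | ⟨v, hv⟩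
  · refine ⟨LinearMap.proj 0, fun w hw => ?_, by simp [hempty]⟩
    rw [LinearMap.proj_apply, h.time w (mem_timelike.1 hw).1]
    exact one_pos
  · refine ⟨-minkForm n v, fun w hw => ?_, fun u hu => ?_⟩
    · exact neg_pos.2 ((mink_comm _ _).trans_lt (h.mink_neg hw (mem_lightlike.1 hv).1))
    · rw [Finset.card_le_one.1 hG u hu v hv]
      exact neg_eq_zero.2 (mem_lightlike.1 hv).2

lemma exists_forall_tilt_ne_zero (h : RightAngledCone e G) (hG : (lightlike G).card ≤ 1)
    (hf : ∀ w ∈ timelike G, 0 < f w) :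
    ∃ a : Module.Dual ℝ (Fin (n + 1) → ℝ), (∀ v ∈ lightlike G, 0 < a v) ∧
      ∀ w ∈ timelike G, ∀ k, tilt a f w (e k) ≠ 0 := by
  have hne (w : timelike G) (k : ι) : f w • e k - f (e k) • w.1 ≠ 0 := fun heq => by
    have hww := congrArg (fun x => mink x x) (sub_eq_zero.1 heq)
    simp only [mink_smul_left, mink_smul_right, h.unit, mul_one] at hww
    nlinarith [mul_self_pos.2 (hf w w.2).ne', mul_self_nonneg (f (e k)), (mem_timelike.1 w.2).2]
  have hv0 (v : lightlike G) : v.1 ≠ 0 := fun heq => by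
    have := h.time v (mem_lightlike.1 v.2).1
    simp [heq] at this
  obtain ⟨a, ha⟩ := Module.exists_dual_forall_apply_ne_zero (K := ℝ)
    (Sum.elim (fun p : timelike G × ι => f p.1 • e p.2 - f (e p.2) • p.1.1)
      fun v : lightlike G => v.1)
    (Sum.forall.2 ⟨fun p => hne p.1 p.2, hv0⟩)
  have htilt (w) (hw : w ∈ timelike G) (k) : tilt a f w (e k) ≠ 0 := by
    have := ha (Sum.inl (⟨w, hw⟩, k))
    simp only [Sum.elim_inl, map_sub, map_smul, smul_eq_mul] at this
    rwa [tilt_apply, mul_comm (a w)]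
  by_cases hpos : ∀ v ∈ lightlike G, 0 < a v
  · exact ⟨a, hpos, htilt⟩
  · push Not at hpos
    obtain ⟨v, hv, hav⟩ := hpos
    refine ⟨-a, fun u hu => ?_, fun w hw k => ?_⟩
    · rw [Finset.card_le_one.1 hG u hu v hv]
      exact neg_pos.2 (lt_of_le_of_ne hav (ha (Sum.inr ⟨v, hv⟩)))
    · rw [tilt_neg_left]
      exact neg_ne_zero.2 (htilt w hw k)

lemma exists_forall_tilt_nonpos (h : RightAngledCone e G) (hG : (timelike G).Nonempty)
    (hf : ∀ w ∈ timelike G, 0 < f w) (hfv : ∀ v ∈ lightlike G, f v = 0)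
    (hav : ∀ v ∈ lightlike G, 0 < a v) :
    ∃ w ∈ timelike G, ∀ k ∈ activeSet e w, tilt a f w (e k) ≤ 0 := by
  obtain ⟨w, hw, hmin⟩ := (timelike G).exists_min_image (fun w => a w / f w) hG
  have hnonneg : ∀ u ∈ G, 0 ≤ tilt a f w u := by
    intro u hu
    rw [tilt_apply, sub_nonneg]
    rcases (h.causal u hu).lt_or_eq with huu | huu
    · have hu := mem_timelike.2 ⟨hu, huu⟩
      have hle := hmin u hu
      rwa [div_le_div_iff₀ (hf w hw) (hf u hu), mul_comm (a u)] at hle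
    · have hu := mem_lightlike.2 ⟨hu, huu⟩
      rw [hfv u hu, mul_zero]
      exact (mul_pos (hf w hw) (hav u hu)).le
  refine ⟨w, hw, fun k hk => ?_⟩
  obtain ⟨ε, hε, hx, hxe⟩ := h.exists_pos_edge hw hk
  obtain ⟨c, hc, hsum⟩ := h.gen _ hx hxe
  have hedge := congrArg (tilt a f w) hsum
  simp only [map_sub, map_smul, map_sum, tilt_self, smul_eq_mul, zero_sub] at hedge
  have hprod : ε * tilt a f w (e k) ≤ 0 := by
    rw [← neg_nonneg, hedge]
    exact Finset.sum_nonneg fun u hu => mul_nonneg (hc u hu) (hnonneg u hu)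
  exact nonpos_of_mul_nonpos_right hprod hε

lemma exists_two_mul_card_polygonVerts_lt (h : RightAngledCone e G) (hn : 5 ≤ n)
    (hgen : ∀ w ∈ timelike G, ∀ k, tilt a f w (e k) ≠ 0)
    (hbot : ∃ w ∈ timelike G, ∀ k ∈ activeSet e w, tilt a f w (e k) ≤ 0) :
    ∃ T : Finset ι, T.card + 2 = n ∧ 2 * (polygonVerts e G T).card <
      5 * ((localMins e G a f T).card + (localMins e G (-a) f T).card) := by
  classical
  obtain ⟨b, hb, hle⟩ := hbot
  obtain ⟨T, hT, hlt⟩ := exists_two_mul_card_filter_lt hn h.card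
    (fun w k => tilt a f w (e k) < 0) ⟨b, hb, fun k hk => lt_of_le_of_ne (hle k hk) (hgen b hb k)⟩
  refine ⟨T, hT, ?_⟩
  convert hlt using 4
  · ext w
    simp only [mem_polygonVerts, Finset.mem_filter]
  · ext w
    simp only [mem_localMins, mem_polygonVerts, Finset.mem_filter, and_assoc]
  · ext w
    simp only [mem_localMins, mem_polygonVerts, Finset.mem_filter, and_assoc]
    refine and_congr_right fun hw => and_congr_right fun _ => ?_
    simp only [tilt_neg_left, neg_neg_iff_pos, not_lt, (hgen w hw _).symm.le_iff_lt]

theorem one_lt_card_lightlike (h : RightAngledCone e G) (hn : 5 ≤ n) :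
    1 < (lightlike G).card := by
  by_contra! hG
  obtain ⟨f, hf, hfv⟩ := h.exists_dual_pos hG
  obtain ⟨a, hav, hgen⟩ := h.exists_forall_tilt_ne_zero hG hf
  obtain ⟨T, hT, hlt⟩ := h.exists_two_mul_card_polygonVerts_lt hn hgen
    (h.exists_forall_tilt_nonpos (h.nonempty_timelike hG) hf hfv hav)
  have hmin : (localMins e G a f T).card ≤ 1 := h.card_localMins_le_one
  have hmax : (localMins e G (-a) f T).card ≤ 1 := h.card_localMins_le_one
  obtain ⟨w, hw⟩ : (polygonVerts e G T).Nonempty := by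
    by_contra! hempty
    simp [localMins, hempty] at hlt
  by_cases hcusp : ∀ v ∈ lightlike G, ∃ k ∈ T, mink (e k) v ≠ 0
  · have := h.five_le_card_polygonVerts hT hcusp hw
    lia
  · push Not at hcusp
    obtain ⟨v, hv, hvT⟩ := hcusp
    rw [h.localMins_neg_eq_empty (mem_lightlike.1 hv).1 hvT (hfv v hv) (hav v hv) hf,
      Finset.card_empty] at hlt
    have := h.three_le_card_polygonVerts hT hG hw
    lia

end RightAngledCone

end Objective

/-! ### The cone over a right-angled polyhedron -/

namespace HypPolyhedron

variable {n : ℕ} {P : HypPolyhedron n} {I : Finset (Fin P.m)} {w u : EuclideanSpace ℝ (Fin n)}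

lemma verts_subset_cl : P.verts ⊆ P.cl := fun _ hw => IsExposed.subset hw rfl

lemma eq_zero_of_mem_verts (hw : w ∈ P.verts) {ε δ : ℝ} (hε : 0 < ε) (hδ : 0 < δ)
    (hpos : w + ε • u ∈ P.cl) (hneg : w + δ • (-u) ∈ P.cl) : u = 0 := by
  have hext : w ∈ Set.extremePoints ℝ P.cl := IsExtreme.mem_extremePoints (IsExposed.isExtreme hw)
  have hseg : w ∈ openSegment ℝ (w + ε • u) (w + δ • (-u)) := by
    refine ⟨δ / (ε + δ), ε / (ε + δ), by positivity, by positivity, by field_simp; ring, ?_⟩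
    match_scalars <;> field_simp <;> ring
  have hεu := (mem_extremePoints.1 hext).2 _ hpos _ hneg hseg
  exact (smul_eq_zero.1 (add_eq_left.1 hεu.1)).resolve_left hε.ne'

namespace FacetSystem

lemma le_card_activeSet (hI : P.FacetSystem I) (hw : w ∈ P.verts) (hw1 : ‖w‖ < 1) :
    n ≤ (activeSet (fun i : I => P.e i) (kleinLift w)).card := by
  classical
  by_contra! hlt
  set A := activeSet (fun i : I => P.e i) (kleinLift w)
  obtain ⟨u, hu, hu0⟩ := (Submodule.ne_bot_iff _).1 <| LinearMap.ker_ne_bot_of_finrank_lt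
    (f := LinearMap.pi fun i : A => (innerSL ℝ (spatialPart n (P.e i))).toLinearMap)
    (by simpa using hlt)
  have huA : ∀ k ∈ A, inner ℝ (spatialPart n (P.e k)) u = 0 := fun k hk =>
    congrFun (LinearMap.mem_ker.1 hu) ⟨k, hk⟩
  have hwle := (P.norm_le_and_mink_nonpos_of_mem_cl (verts_subset_cl hw)).2
  have hmove {u} (hu : ∀ k ∈ A, inner ℝ (spatialPart n (P.e k)) u = 0) :
      ∃ ε : ℝ, 0 < ε ∧ w + ε • u ∈ P.cl := by
    obtain ⟨ε, hε, hcl, -⟩ := exists_pos_add_smul_mem_cl (P := P) (q := w) (u := u)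
      (A := A.map (.subtype _)) (J := (Aᶜ).map (.subtype _))
      (fun x hx hxA hxJ => hI.mink_nonpos x hx fun k hk => by
        by_cases hkA : ⟨k, hk⟩ ∈ A
        · exact (hxA k (Finset.mem_map_of_mem _ hkA)).le
        · exact (hxJ k (Finset.mem_map_of_mem _ (Finset.mem_compl.2 hkA))).le)
      (kleinLift_mem_futureCone_iff.2 hw1)
      (Finset.forall_mem_map.2 fun k hk => (mem_activeSet.1 hk :))
      (Finset.forall_mem_map.2 fun k hk => lt_of_le_of_ne (hwle k) fun h0 =>
        Finset.mem_compl.1 hk (mem_activeSet.2 h0))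
      (Finset.forall_mem_map.2 fun k hk => hu k hk)
    exact ⟨ε, hε, hcl⟩
  obtain ⟨ε, hε, hpos⟩ := hmove huA
  obtain ⟨δ, hδ, hneg⟩ := hmove fun k hk => by rw [inner_neg_right, huA k hk, neg_zero]
  exact hu0 (eq_zero_of_mem_verts hw hε hδ hpos hneg)

lemma card_activeSet (hI : P.FacetSystem I) (hra : P.IsRightAngled) (hw : w ∈ P.verts)
    (hw1 : ‖w‖ < 1) : (activeSet (fun i : I => P.e i) (kleinLift w)).card = n := by
  refine le_antisymm ?_ (hI.le_card_activeSet hw hw1)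
  have hx := kleinLift_mem_futureCone_iff.2 hw1
  rw [← Fintype.card_coe]
  refine card_le_of_orthogonal_of_mem_futureCone hx
    (b := fun i : activeSet (fun i : I => P.e i) (kleinLift w) => P.e i)
    (fun i j hij => hI.mink_e_eq_zero hra i.1.2 j.1.2 (fun h => hij (Subtype.ext (Subtype.ext h)))
      hx (mem_activeSet.1 i.2 :) (mem_activeSet.1 j.2 :))
    (fun i h0 => ?_) (fun i => ?_)
  · simpa [h0, mink_zero_left] using P.unit i
  · exact (mink_comm _ _).trans (mem_activeSet.1 i.2 :)

end FacetSystem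

lemma FiniteVolume.exists_combination (hfv : P.FiniteVolume) {x : Fin (n + 1) → ℝ}
    (hx : x ∈ futureCone n) (hxe : ∀ i, mink (P.e i) x ≤ 0) :
    ∃ c : EuclideanSpace ℝ (Fin n) → ℝ, (∀ p ∈ hfv.1.toFinset, 0 ≤ c p) ∧
      x = ∑ p ∈ hfv.1.toFinset, c p • kleinLift p := by
  have hcl : kleinMap x ∈ P.cl := P.mem_cl_of_mem_futureCone (kleinLift_kleinMap_mem_futureCone hx)
    fun i => (mink_kleinLift_kleinMap_nonpos_iff hx.2 _).2 (hxe i)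
  rw [hfv.2, ← hfv.1.coe_toFinset, Finset.mem_convexHull'] at hcl
  obtain ⟨c, hc, hc1, hcx⟩ := hcl
  refine ⟨fun p => x 0 * c p, fun p hp => mul_nonneg hx.2.le (hc p hp), ?_⟩
  simp only [mul_smul]
  rw [← Finset.smul_sum, ← kleinLift_sum hc1, hcx, smul_kleinLift_kleinMap hx.2.ne']

/-- The vertices of a finite-volume polyhedron, as vectors of Minkowski space of time coordinate
`1`. -/
def FiniteVolume.liftedVerts (hfv : P.FiniteVolume) : Finset (Fin (n + 1) → ℝ) :=
  hfv.1.toFinset.map ⟨kleinLift, kleinLift_injective⟩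

lemma FiniteVolume.forall_mem_liftedVerts (hfv : P.FiniteVolume)
    {p : (Fin (n + 1) → ℝ) → Prop} :
    (∀ w ∈ hfv.liftedVerts, p w) ↔ ∀ w ∈ P.verts, p (kleinLift w) := by
  simp [liftedVerts]

lemma FiniteVolume.forall_mem_timelike_liftedVerts (hfv : P.FiniteVolume)
    {p : (Fin (n + 1) → ℝ) → Prop} :
    (∀ w ∈ timelike hfv.liftedVerts, p w) ↔ ∀ w ∈ P.verts, ‖w‖ < 1 → p (kleinLift w) := by
  simp [mem_timelike, liftedVerts, mink_kleinLift_self]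

lemma FiniteVolume.card_lightlike_liftedVerts (hfv : P.FiniteVolume) :
    (lightlike hfv.liftedVerts).card = P.vInf := by
  rw [vInf, ← Set.ncard_image_of_injective _ kleinLift_injective, ← Set.ncard_coe_finset]
  congr 1
  ext x
  simp only [Finset.mem_coe, mem_lightlike, liftedVerts, Finset.mem_map, Set.Finite.mem_toFinset,
    Function.Embedding.coeFn_mk, idealVerts, Set.mem_image, Set.mem_ofPred_eq]
  constructor
  · rintro ⟨⟨w, hw, rfl⟩, hx⟩
    rw [mink_kleinLift_self, sub_eq_zero, pow_eq_one_iff_of_nonneg (norm_nonneg w)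
      two_ne_zero] at hx
    exact ⟨w, ⟨hw, hx⟩, rfl⟩
  · rintro ⟨w, ⟨hw, hw1⟩, rfl⟩
    exact ⟨⟨w, hw, rfl⟩, by rw [mink_kleinLift_self, hw1, one_pow, sub_self]⟩

lemma FacetSystem.rightAngledCone (hI : P.FacetSystem I) (hra : P.IsRightAngled)
    (hfv : P.FiniteVolume) : RightAngledCone (fun i : I => P.e i) hfv.liftedVerts where
  unit i := P.unit i
  ne_smul i j hij := hI.ne_smul i.2 j.2 (Subtype.coe_ne_coe.2 hij)
  time := hfv.forall_mem_liftedVerts.2 fun w _ => kleinLift_zero w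
  causal := hfv.forall_mem_liftedVerts.2 fun w hw => by
    have hw1 := (P.norm_le_and_mink_nonpos_of_mem_cl (verts_subset_cl hw)).1
    rw [mink_kleinLift_self]
    nlinarith [norm_nonneg w]
  nonpos := hfv.forall_mem_liftedVerts.2 fun w hw i =>
    (P.norm_le_and_mink_nonpos_of_mem_cl (verts_subset_cl hw)).2 i
  card := hfv.forall_mem_timelike_liftedVerts.2 fun w hw hw1 => hI.card_activeSet hra hw hw1
  orth := hfv.forall_mem_timelike_liftedVerts.2 fun _ _ hw1 i hi j hj hij =>
    hI.mink_e_eq_zero hra i.2 j.2 (Subtype.coe_ne_coe.2 hij) (kleinLift_mem_futureCone_iff.2 hw1)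
      (mem_activeSet.1 hi :) (mem_activeSet.1 hj :)
  gen x hx hxe := by
    obtain ⟨c, hc, hsum⟩ := hfv.exists_combination hx
      (hI.mink_nonpos x hx fun i hi => hxe ⟨i, hi⟩)
    refine ⟨fun w => c (kleinMap w), ?_, ?_⟩
    · simpa [FiniteVolume.liftedVerts, kleinMap_kleinLift] using hc
    · simpa [FiniteVolume.liftedVerts, kleinMap_kleinLift] using hsum
  nonempty :=
    let ⟨x, hx, hxe⟩ := P.exists_forall_mink_neg
    ⟨x, hx, fun i => (hxe i).le⟩

end HypPolyhedron

theorem cusps_of_5_polyhedron_general {n : ℕ} (hn : 5 ≤ n) (P : HypPolyhedron n)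
    (hfv : P.FiniteVolume) (hra : P.IsRightAngled) : 2 ≤ P.vInf := by
  obtain ⟨I, hI⟩ := P.exists_facetSystem
  rw [← hfv.card_lightlike_liftedVerts]
  exact (hI.rightAngledCone hra hfv).one_lt_card_lightlike hn

/-- Every finite-volume non-compact right-angled convex hyperbolic `5`-polyhedron has at
least two ideal vertices. -/
theorem cusps_of_5_polyhedron (P : HypPolyhedron 5) (hfv : P.FiniteVolume)
    (hra : P.IsRightAngled) (hnc : ¬ P.IsCompactPoly) :
    2 ≤ P.vInf := by
  exact cusps_of_5_polyhedron_general le_rfl P hfv hra
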